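/- arXiv:1103.4906 — 6 statements merged into one kernel-verified Lean document; each statement's English description precedes it below -/
import Mathlib

section
/- Suppose α0 = α3/2, α1 = α3/2 and α2 = 1/4 − α3 (so the constraint α0+α1+2α2+α3 = 1/2 holds). Then the constant quadruple (q1,p1,q2,p2) = (0, 1/4, 0, 1/4) is a rational solution of A5^(2)(α3/2, α3/2, 1/4−α3, α3), and moreover every rational solution of A5^(2)(α3/2, α3/2, 1/4−α3, α3) equals (0, 1/4, 0, 1/4). -/
open Filter Topology Polynomial

/-- Evaluation of a rational function with complex coefficients at a point,
using its reduced numerator and denominator. -/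
noncomputable def evR (f : RatFunc ℂ) (t : ℂ) : ℂ := f.num.eval t / f.denom.eval t

/-- A rational function has no pole at `c` if its reduced denominator does not vanish at `c`. -/
def NoPoleAt (f : RatFunc ℂ) (c : ℂ) : Prop := f.denom.eval c ≠ 0

/-- `(q1, p1, q2, p2)` is a rational solution of the Sasano system
`A5^(2)(α0, α1, α2, α3)` (the parameter `α2` does not occur in the equations):
the four differential equations hold at every point `t ∈ ℂ` which is not a pole
of any of `q1, p1, q2, p2`. -/
def IsSasanoSol (a0 a1 a3 : ℂ) (q1 p1 q2 p2 : RatFunc ℂ) : Prop :=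
  ∀ t : ℂ, NoPoleAt q1 t → NoPoleAt p1 t → NoPoleAt q2 t → NoPoleAt p2 t →
    (t * deriv (evR q1) t =
      2 * (evR q1 t) ^ 2 * evR p1 t - (evR q1 t) ^ 2 + (a0 + a1 + a3) * evR q1 t
        - t + 4 * t * evR p2 t + 2 * evR q1 t * evR q2 t * evR p2 t) ∧
    (t * deriv (evR p1) t =
      -2 * evR q1 t * (evR p1 t) ^ 2 + 2 * evR q1 t * evR p1 t
        - (a0 + a1 + a3) * evR p1 t + a0 - 2 * evR p1 t * evR q2 t * evR p2 t) ∧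
    (t * deriv (evR q2) t =
      2 * (evR q2 t) ^ 2 * evR p2 t - (evR q2 t) ^ 2 + (a0 + a1 + a3) * evR q2 t
        - t + 4 * t * evR p1 t + 2 * evR q1 t * evR p1 t * evR q2 t) ∧
    (t * deriv (evR p2) t =
      -2 * evR q2 t * (evR p2 t) ^ 2 + 2 * evR q2 t * evR p2 t
        - (a0 + a1 + a3) * evR p2 t + a1 - 2 * evR q1 t * evR p1 t * evR p2 t)

/-!
Write `O(n)` for the rational functions of degree at most `n` and `θ = t d/dt`, which preserves
every `O(n)`. With `f = 2 (q₁ p₁ + q₂ p₂) + α₀ + α₁ + α₃` the equations become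
`θ qᵢ = qᵢ (f - qᵢ) + t (4 pⱼ - 1)` and `θ pᵢ = pᵢ (2 qᵢ - f) + const`, where `{i, j} = {1, 2}`.
Comparing degrees, first `pᵢ ∉ O(-1)`, then `f - 2 qᵢ ∈ O(0)`, and finally `qᵢ ∈ O(0)` and
`4 pᵢ - 1 ∈ O(-1)`. For such solutions the linear part of the equations determines the expansion at
infinity order by order: if two solutions agree modulo `O(n)`, they agree modulo `O(n - 1)`. So
there is at most one rational solution, whatever the parameters, and it remains to check when the
given constants form one.
-/

section OrderAtInfinity

variable {K : Type*} [Field K] {m n k : ℤ} {x y : RatFunc K}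

open scoped Classical in
/-- The rational functions that are `O(t ^ n)` at infinity, that is, those of degree at most `n`,
the zero function being of every degree. -/
noncomputable def orderLE (n : ℤ) : AddSubgroup (RatFunc K) :=
  (RatFunc.inftyValuation K).leAddSubgroup (WithZero.exp n)

open scoped Classical in
theorem mem_orderLE : x ∈ orderLE n ↔ RatFunc.inftyValuation K x ≤ WithZero.exp n := Iff.rfl

theorem mem_orderLE_iff_intDegree_le (hx : x ≠ 0) : x ∈ orderLE n ↔ x.intDegree ≤ n := by
  classical
  rw [mem_orderLE, RatFunc.inftyValuation_apply, RatFunc.inftyValuation_of_nonzero K hx,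
    WithZero.exp_le_exp]

theorem orderLE_mono (h : m ≤ n) (hx : x ∈ orderLE m) : x ∈ orderLE n :=
  Valuation.leAddSubgroup_monotone _ (WithZero.exp_le_exp.2 h) hx

theorem mul_mem_orderLE (hx : x ∈ orderLE m) (hy : y ∈ orderLE n) (h : m + n ≤ k) :
    x * y ∈ orderLE k := by
  apply orderLE_mono h
  rw [mem_orderLE, map_mul, WithZero.exp_add]
  exact mul_le_mul' hx hy

theorem C_mem_orderLE (c : K) : RatFunc.C c ∈ orderLE 0 := by
  by_cases hc : c = 0
  · simp [hc]
  · simp [mem_orderLE, hc]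

theorem one_mem_orderLE : (1 : RatFunc K) ∈ orderLE 0 := by
  simp [mem_orderLE]

theorem X_mem_orderLE : (RatFunc.X : RatFunc K) ∈ orderLE 1 := by
  simp [mem_orderLE]

theorem algebraMap_mem_orderLE (p : K[X]) :
    algebraMap K[X] (RatFunc K) p ∈ orderLE (p.natDegree : ℤ) := by
  by_cases hp : p = 0
  · simp [hp]
  · simp [mem_orderLE_iff_intDegree_le, hp]

theorem ofNat_mul_mem_orderLE (k : ℕ) [k.AtLeastTwo] (hx : x ∈ orderLE n) :
    (ofNat(k) : RatFunc K) * x ∈ orderLE n := by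
  simpa [nsmul_eq_mul] using nsmul_mem hx (OfNat.ofNat k)

theorem two_mul_mem_orderLE_iff [NeZero (2 : K)] : 2 * x ∈ orderLE n ↔ x ∈ orderLE n := by
  classical
  rw [mem_orderLE, map_mul, ← map_ofNat RatFunc.C, RatFunc.inftyValuation.C _ two_ne_zero,
    one_mul, mem_orderLE]

theorem mem_orderLE_of_four_mul_mem [NeZero (2 : K)] (hx : 4 * x ∈ orderLE n) :
    x ∈ orderLE n := by
  rwa [show 4 * x = 2 * (2 * x) by ring, two_mul_mem_orderLE_iff, two_mul_mem_orderLE_iff] at hx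

theorem mem_orderLE_or_mem_orderLE_of_mul_mem (h : x * y ∈ orderLE (m + n)) :
    x ∈ orderLE (m - 1) ∨ y ∈ orderLE n := by
  by_cases hx : x = 0
  · simp [hx]
  by_cases hy : y = 0
  · simp [hy]
  rw [mem_orderLE_iff_intDegree_le (mul_ne_zero hx hy), RatFunc.intDegree_mul hx hy] at h
  rw [mem_orderLE_iff_intDegree_le hx, mem_orderLE_iff_intDegree_le hy]
  lia

theorem mem_orderLE_of_X_mul_mem (h : RatFunc.X * x ∈ orderLE n) : x ∈ orderLE (n - 1) := by
  refine (mem_orderLE_or_mem_orderLE_of_mul_mem (m := 1) (by simpa using h)).resolve_left ?_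
  simp [mem_orderLE_iff_intDegree_le RatFunc.X_ne_zero]

theorem mem_orderLE_of_forall_pred
    (h : ∀ m > n, x ∈ orderLE m → x ∈ orderLE (m - 1)) : x ∈ orderLE n := by
  by_cases hx : x = 0
  · simp [hx]
  simp only [mem_orderLE_iff_intDegree_le hx] at h ⊢
  specialize h x.intDegree
  lia

theorem eq_zero_of_forall_mem_orderLE (h : ∀ k : ℕ, x ∈ orderLE (-k : ℤ)) : x = 0 := by
  by_contra hx
  have := (mem_orderLE_iff_intDegree_le hx).1 (h (x.intDegree.natAbs + 1))
  lia

theorem not_forall_sq_add_C_mul_X_mem_orderLE {c : K} (hc : c ≠ 0) :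
    ¬ ∀ n ≥ 0, x ∈ orderLE n → x ^ 2 + RatFunc.C c * RatFunc.X ∈ orderLE n := by
  intro h
  have hx : x ∈ orderLE 0 := mem_orderLE_of_forall_pred fun m hm hxm => by
    have hX : RatFunc.C c * RatFunc.X ∈ orderLE m :=
      mul_mem_orderLE (C_mem_orderLE c) X_mem_orderLE (by lia)
    have hsq : x * x ∈ orderLE (m + 0) := by simpa [sq] using sub_mem (h m hm.le hxm) hX
    rcases mem_orderLE_or_mem_orderLE_of_mul_mem hsq with h | h
    · exact h
    · exact orderLE_mono (by lia) h
  have hX : RatFunc.C c * RatFunc.X ∈ orderLE 0 := by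
    simpa [sq] using sub_mem (h 0 le_rfl hx) (mul_mem_orderLE hx hx (by lia))
  have hC : RatFunc.C c ≠ 0 := by simpa using hc
  rw [mem_orderLE_iff_intDegree_le (mul_ne_zero hC RatFunc.X_ne_zero),
    RatFunc.intDegree_mul hC RatFunc.X_ne_zero] at hX
  simp at hX

end OrderAtInfinity

section EulerDerivation

open scoped nonZeroDivisors

variable {K : Type*} [Field K] {n : ℤ} {x : RatFunc K}

/-- The Euler operator `t d/dt` on rational functions: the extension to the fraction field of the
derivation of polynomials that sends `X` to `X`. -/
noncomputable def eulerDerivation : Derivation K (RatFunc K) (RatFunc K) :=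
  haveI : Algebra.FormallyEtale K[X] (RatFunc K) := .of_isLocalization K[X]⁰
  ((KaehlerDifferential.isBaseChange_of_formallyEtale K K[X] (RatFunc K)).lift
    (Polynomial.mkDerivation K (RatFunc.X : RatFunc K)).liftKaehlerDifferential).compDer
      (KaehlerDifferential.D K (RatFunc K))

theorem eulerDerivation_algebraMap (p : K[X]) :
    eulerDerivation (algebraMap K[X] (RatFunc K) p) =
      algebraMap K[X] (RatFunc K) (X * derivative p) := by
  have : Algebra.FormallyEtale K[X] (RatFunc K) := .of_isLocalization K[X]⁰
  have h := (KaehlerDifferential.isBaseChange_of_formallyEtale K K[X] (RatFunc K)).lift_eq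
    (Polynomial.mkDerivation K (RatFunc.X : RatFunc K)).liftKaehlerDifferential
    (KaehlerDifferential.D K K[X] p)
  rw [KaehlerDifferential.map_D, Derivation.liftKaehlerDifferential_comp_D,
    Polynomial.mkDerivation_apply] at h
  exact h.trans (by rw [Algebra.smul_def, mul_comm, map_mul, RatFunc.algebraMap_X])

theorem eulerDerivation_C (c : K) : eulerDerivation (RatFunc.C c) = 0 :=
  eulerDerivation.map_algebraMap c

theorem algebraMap_X_mul_derivative_mem_orderLE (p : K[X]) :
    algebraMap K[X] (RatFunc K) (X * derivative p) ∈ orderLE (p.natDegree : ℤ) := by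
  refine orderLE_mono (Nat.cast_le.2 ?_) (algebraMap_mem_orderLE _)
  rcases eq_or_ne p.natDegree 0 with hp | hp
  · simp [derivative_of_natDegree_zero hp]
  · have := natDegree_derivative_lt hp
    have := natDegree_mul_le (p := X) (q := derivative p)
    rw [natDegree_X] at this
    lia

theorem denom_mul_eulerDerivation (x : RatFunc K) :
    algebraMap K[X] (RatFunc K) x.denom * eulerDerivation x =
      algebraMap K[X] (RatFunc K) (X * derivative x.num)
        - x * algebraMap K[X] (RatFunc K) (X * derivative x.denom) := by
  have num_eq : algebraMap K[X] (RatFunc K) x.num = algebraMap K[X] (RatFunc K) x.denom * x := by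
    rw [mul_comm, ← div_eq_iff (by simpa using x.denom_ne_zero), RatFunc.num_div_denom]
  rw [← eulerDerivation_algebraMap, ← eulerDerivation_algebraMap, num_eq, Derivation.leibniz,
    smul_eq_mul, smul_eq_mul, add_sub_cancel_right]

theorem eulerDerivation_mem_orderLE (hx : x ∈ orderLE n) : eulerDerivation x ∈ orderLE n := by
  rcases eq_or_ne x 0 with rfl | hx0
  · simp
  refine orderLE_mono ((mem_orderLE_iff_intDegree_le hx0).1 hx) ?_
  have degree_eq : (x.denom.natDegree : ℤ) + x.intDegree = x.num.natDegree := by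
    simp [RatFunc.intDegree]
  have mul_mem : algebraMap K[X] (RatFunc K) x.denom * eulerDerivation x ∈
      orderLE (x.denom.natDegree + x.intDegree) := by
    rw [denom_mul_eulerDerivation]
    refine sub_mem (degree_eq ▸ algebraMap_X_mul_derivative_mem_orderLE _) ?_
    exact mul_mem_orderLE ((mem_orderLE_iff_intDegree_le hx0).2 le_rfl)
      (algebraMap_X_mul_derivative_mem_orderLE _) (add_comm _ _).le
  refine (mem_orderLE_or_mem_orderLE_of_mul_mem mul_mem).resolve_left ?_
  simp [mem_orderLE_iff_intDegree_le, x.denom_ne_zero]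

end EulerDerivation

section SasanoSystem

variable {K : Type*} [Field K] {α₀ α₁ α₃ : K} {f q₁ p₁ q₂ p₂ F Q₁ P₁ Q₂ P₂ : RatFunc K} {n : ℤ}

/-- The Sasano system as differential equations in the field of rational functions, with the
combination `f = 2 (q₁ p₁ + q₂ p₂) + α₀ + α₁ + α₃` common to all four equations made explicit. -/
structure SasanoSystem (α₀ α₁ α₃ : K) (f q₁ p₁ q₂ p₂ : RatFunc K) : Prop where
  f_eq : f = 2 * (q₁ * p₁ + q₂ * p₂) + RatFunc.C (α₀ + α₁ + α₃)
  euler_q₁ : eulerDerivation q₁ = q₁ * (f - q₁) + RatFunc.X * (4 * p₂ - 1)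
  euler_p₁ : eulerDerivation p₁ = p₁ * (2 * q₁ - f) + RatFunc.C α₀
  euler_q₂ : eulerDerivation q₂ = q₂ * (f - q₂) + RatFunc.X * (4 * p₁ - 1)
  euler_p₂ : eulerDerivation p₂ = p₂ * (2 * q₂ - f) + RatFunc.C α₁

namespace SasanoSystem

theorem swap (h : SasanoSystem α₀ α₁ α₃ f q₁ p₁ q₂ p₂) :
    SasanoSystem α₁ α₀ α₃ f q₂ p₂ q₁ p₁ where
  f_eq := by rw [h.f_eq, add_comm (q₁ * p₁), add_comm α₀]
  euler_q₁ := h.euler_q₂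
  euler_p₁ := h.euler_p₂
  euler_q₂ := h.euler_q₁
  euler_p₂ := h.euler_p₁

theorem p₁_mem_orderLE_or_f_sub_mem_orderLE (h : SasanoSystem α₀ α₁ α₃ f q₁ p₁ q₂ p₂) :
    p₁ ∈ orderLE (-1) ∨ f - 2 * q₁ ∈ orderLE 0 := by
  refine or_iff_not_imp_right.2 fun hf => mem_orderLE_of_forall_pred fun m hm hp => ?_
  have mul_eq : p₁ * (f - 2 * q₁) = RatFunc.C α₀ - eulerDerivation p₁ := by
    linear_combination h.euler_p₁
  have mul_mem : p₁ * (f - 2 * q₁) ∈ orderLE (m + 0) := by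
    rw [mul_eq]
    exact sub_mem (orderLE_mono (by lia) (C_mem_orderLE _))
      (orderLE_mono (by lia) (eulerDerivation_mem_orderLE hp))
  exact (mem_orderLE_or_mem_orderLE_of_mul_mem mul_mem).resolve_right hf

theorem q₁_mul_p₁_mem_orderLE (h : SasanoSystem α₀ α₁ α₃ f q₁ p₁ q₂ p₂) (hp₁ : p₁ ∈ orderLE (-1))
    (hp₂ : p₂ ∈ orderLE 0) : q₁ * p₁ ∈ orderLE 0 := by
  -- The terms of `t d/dt (q₁ p₁)` that contain `f` cancel.
  have euler_add : eulerDerivation (q₁ * p₁ + RatFunc.C α₀) =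
      q₁ * (q₁ * p₁ + RatFunc.C α₀) + RatFunc.X * p₁ * (4 * p₂ - 1) := by
    rw [map_add, Derivation.leibniz, eulerDerivation_C, h.euler_q₁, h.euler_p₁, smul_eq_mul,
      smul_eq_mul]
    ring
  have remainder_mem : RatFunc.X * p₁ * (4 * p₂ - 1) ∈ orderLE 0 :=
    mul_mem_orderLE (mul_mem_orderLE X_mem_orderLE hp₁ le_rfl)
      (sub_mem (ofNat_mul_mem_orderLE 4 hp₂) one_mem_orderLE) le_rfl
  suffices q₁ * p₁ + RatFunc.C α₀ ∈ orderLE 0 by simpa using sub_mem this (C_mem_orderLE α₀)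
  refine mem_orderLE_of_forall_pred fun m hm hu => ?_
  have mul_mem : (q₁ * p₁ + RatFunc.C α₀) * q₁ ∈ orderLE (m + 0) := by
    rw [mul_comm, ← sub_eq_of_eq_add euler_add]
    exact sub_mem (orderLE_mono (by lia) (eulerDerivation_mem_orderLE hu))
      (orderLE_mono (by lia) remainder_mem)
  rcases mem_orderLE_or_mem_orderLE_of_mul_mem mul_mem with hu | hq
  · exact hu
  · exact orderLE_mono (by lia : (0 : ℤ) ≤ m - 1)
      (add_mem (mul_mem_orderLE hq hp₁ (by lia)) (C_mem_orderLE α₀))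

theorem p₂_notMem_orderLE_of_f_mem (h : SasanoSystem α₀ α₁ α₃ f q₁ p₁ q₂ p₂) (hf : f ∈ orderLE 0) :
    p₂ ∉ orderLE (-1) := fun hp₂ => by
  refine not_forall_sq_add_C_mul_X_mem_orderLE (x := q₁) (one_ne_zero (α := K)) fun n hn hq => ?_
  have sq_eq : q₁ ^ 2 + RatFunc.C 1 * RatFunc.X =
      q₁ * f - eulerDerivation q₁ + 4 * (RatFunc.X * p₂) := by
    rw [h.euler_q₁, map_one]
    ring
  rw [sq_eq]
  exact add_mem (sub_mem (mul_mem_orderLE hq hf (by lia)) (eulerDerivation_mem_orderLE hq))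
    (ofNat_mul_mem_orderLE 4 (mul_mem_orderLE X_mem_orderLE hp₂ (by lia)))

theorem p₂_notMem_orderLE_of_f_sub_mem (h : SasanoSystem α₀ α₁ α₃ f q₁ p₁ q₂ p₂)
    (hf : f - 2 * q₁ ∈ orderLE 0) : p₂ ∉ orderLE (-1) := fun hp₂ => by
  refine not_forall_sq_add_C_mul_X_mem_orderLE (x := q₁) (neg_ne_zero.2 (one_ne_zero (α := K)))
    fun n hn hq => ?_
  have sq_eq : q₁ ^ 2 + RatFunc.C (-1) * RatFunc.X =
      eulerDerivation q₁ - q₁ * (f - 2 * q₁) - 4 * (RatFunc.X * p₂) := by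
    rw [h.euler_q₁, map_neg, map_one]
    ring
  rw [sq_eq]
  exact sub_mem (sub_mem (eulerDerivation_mem_orderLE hq) (mul_mem_orderLE hq hf (by lia)))
    (ofNat_mul_mem_orderLE 4 (mul_mem_orderLE X_mem_orderLE hp₂ (by lia)))

theorem p₂_notMem_orderLE (h : SasanoSystem α₀ α₁ α₃ f q₁ p₁ q₂ p₂) : p₂ ∉ orderLE (-1) := by
  intro hp₂
  rcases h.p₁_mem_orderLE_or_f_sub_mem_orderLE with hp₁ | hf
  · refine h.p₂_notMem_orderLE_of_f_mem ?_ hp₂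
    have hqp₁ := h.q₁_mul_p₁_mem_orderLE hp₁ (orderLE_mono (by lia) hp₂)
    have hqp₂ := h.swap.q₁_mul_p₁_mem_orderLE hp₂ (orderLE_mono (by lia) hp₁)
    rw [h.f_eq]
    exact add_mem (ofNat_mul_mem_orderLE 2 (add_mem hqp₁ hqp₂)) (C_mem_orderLE _)
  · exact h.p₂_notMem_orderLE_of_f_sub_mem hf hp₂

theorem f_sub_two_mul_q₁_mem_orderLE (h : SasanoSystem α₀ α₁ α₃ f q₁ p₁ q₂ p₂) :
    f - 2 * q₁ ∈ orderLE 0 :=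
  h.p₁_mem_orderLE_or_f_sub_mem_orderLE.resolve_left h.swap.p₂_notMem_orderLE

theorem X_mul_four_mul_p₂_sub_one_add_sq_mem_orderLE
    (h : SasanoSystem α₀ α₁ α₃ f q₁ p₁ q₂ p₂) (hq₁ : q₁ ∈ orderLE n) :
    RatFunc.X * (4 * p₂ - 1) + q₁ ^ 2 ∈ orderLE n := by
  have eq : RatFunc.X * (4 * p₂ - 1) + q₁ ^ 2 = eulerDerivation q₁ - q₁ * (f - 2 * q₁) := by
    rw [h.euler_q₁]
    ring
  rw [eq]
  exact sub_mem (eulerDerivation_mem_orderLE hq₁)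
    (mul_mem_orderLE hq₁ h.f_sub_two_mul_q₁_mem_orderLE (by lia))

variable [NeZero (2 : K)]

theorem q₂_sub_q₁_mem_orderLE (h : SasanoSystem α₀ α₁ α₃ f q₁ p₁ q₂ p₂) : q₂ - q₁ ∈ orderLE 0 := by
  rw [← two_mul_mem_orderLE_iff, show 2 * (q₂ - q₁) = (f - 2 * q₁) - (f - 2 * q₂) by ring]
  exact sub_mem h.f_sub_two_mul_q₁_mem_orderLE h.swap.f_sub_two_mul_q₁_mem_orderLE

theorem q₁_pow_three_mem_orderLE (h : SasanoSystem α₀ α₁ α₃ f q₁ p₁ q₂ p₂) (hn : 1 ≤ n)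
    (hq₁ : q₁ ∈ orderLE n) : q₁ ^ 3 ∈ orderLE (2 * n) := by
  have hd := h.q₂_sub_q₁_mem_orderLE
  have hq₂ : q₂ ∈ orderLE n := by simpa using add_mem hq₁ (orderLE_mono (by lia) hd)
  -- Multiplying the definition of `f` by `t` lets the equations for `q₁` and `q₂` eliminate `p₁`
  -- and `p₂`, which leaves a single cubic term.
  have cubic_eq : 2 * q₁ ^ 3 =
      q₁ * (RatFunc.X * (4 * p₁ - 1) + q₂ ^ 2) + q₂ * (RatFunc.X * (4 * p₂ - 1) + q₁ ^ 2)
        - RatFunc.X * (2 * (f - 2 * q₁) + 2 * q₁ - (q₂ - q₁) - 2 * RatFunc.C (α₀ + α₁ + α₃))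
        - (q₂ - q₁) * q₁ * (3 * q₁ + (q₂ - q₁)) := by
    linear_combination (2 * RatFunc.X) * h.f_eq
  rw [← two_mul_mem_orderLE_iff, cubic_eq]
  refine sub_mem (sub_mem (add_mem ?_ ?_) ?_) ?_
  · exact mul_mem_orderLE hq₁ (h.swap.X_mul_four_mul_p₂_sub_one_add_sq_mem_orderLE hq₂) (by lia)
  · exact mul_mem_orderLE hq₂ (h.X_mul_four_mul_p₂_sub_one_add_sq_mem_orderLE hq₁) (by lia)
  · refine mul_mem_orderLE X_mem_orderLE (n := n) ?_ (by lia)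
    have hle : (0 : ℤ) ≤ n := by lia
    exact sub_mem (sub_mem (add_mem (ofNat_mul_mem_orderLE 2 (orderLE_mono hle
      h.f_sub_two_mul_q₁_mem_orderLE)) (ofNat_mul_mem_orderLE 2 hq₁)) (orderLE_mono hle hd))
      (ofNat_mul_mem_orderLE 2 (orderLE_mono hle (C_mem_orderLE _)))
  · exact mul_mem_orderLE (mul_mem_orderLE hd hq₁ le_rfl)
      (add_mem (ofNat_mul_mem_orderLE 3 hq₁) (orderLE_mono (by lia) hd)) (by lia)

theorem q₁_mem_orderLE (h : SasanoSystem α₀ α₁ α₃ f q₁ p₁ q₂ p₂) : q₁ ∈ orderLE 0 := by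
  refine mem_orderLE_of_forall_pred fun m hm hq => ?_
  have cube_mem : q₁ * (q₁ * q₁) ∈ orderLE (m + (m - 1 + 1)) := by
    have := h.q₁_pow_three_mem_orderLE hm hq
    rw [show q₁ * (q₁ * q₁) = q₁ ^ 3 by ring]
    exact orderLE_mono (by lia) this
  rcases mem_orderLE_or_mem_orderLE_of_mul_mem cube_mem with hq | hsq
  · exact hq
  rcases mem_orderLE_or_mem_orderLE_of_mul_mem (m := m) (n := 0) (by simpa using hsq) with hq | hq
  · exact hq
  · exact orderLE_mono (by lia) hq

theorem f_mem_orderLE (h : SasanoSystem α₀ α₁ α₃ f q₁ p₁ q₂ p₂) : f ∈ orderLE 0 := by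
  simpa using add_mem h.f_sub_two_mul_q₁_mem_orderLE (ofNat_mul_mem_orderLE 2 h.q₁_mem_orderLE)

theorem four_mul_p₂_sub_one_mem_orderLE (h : SasanoSystem α₀ α₁ α₃ f q₁ p₁ q₂ p₂) :
    4 * p₂ - 1 ∈ orderLE (-1) := by
  refine mem_orderLE_of_X_mul_mem (n := 0) ?_
  rw [← sub_eq_of_eq_add' h.euler_q₁]
  exact sub_mem (eulerDerivation_mem_orderLE h.q₁_mem_orderLE)
    (mul_mem_orderLE h.q₁_mem_orderLE (sub_mem h.f_mem_orderLE h.q₁_mem_orderLE) le_rfl)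

theorem p₂_mem_orderLE (h : SasanoSystem α₀ α₁ α₃ f q₁ p₁ q₂ p₂) : p₂ ∈ orderLE 0 := by
  apply mem_orderLE_of_four_mul_mem
  simpa using add_mem (orderLE_mono (by lia) h.four_mul_p₂_sub_one_mem_orderLE) one_mem_orderLE

theorem p₂_sub_mem_orderLE (h : SasanoSystem α₀ α₁ α₃ f q₁ p₁ q₂ p₂)
    (H : SasanoSystem α₀ α₁ α₃ F Q₁ P₁ Q₂ P₂) (hq₁ : q₁ - Q₁ ∈ orderLE n)
    (hf : f - F ∈ orderLE n) : p₂ - P₂ ∈ orderLE (n - 1) := by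
  refine mem_orderLE_of_four_mul_mem (mem_orderLE_of_X_mul_mem ?_)
  have mul_eq : RatFunc.X * (4 * (p₂ - P₂)) = eulerDerivation (q₁ - Q₁)
      - ((q₁ - Q₁) * (f - q₁) + Q₁ * ((f - F) - (q₁ - Q₁))) := by
    rw [map_sub, h.euler_q₁, H.euler_q₁]
    ring
  rw [mul_eq]
  exact sub_mem (eulerDerivation_mem_orderLE hq₁)
    (add_mem (mul_mem_orderLE hq₁ (sub_mem h.f_mem_orderLE h.q₁_mem_orderLE) (by lia))
      (mul_mem_orderLE H.q₁_mem_orderLE (sub_mem hf hq₁) (by lia)))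

theorem f_sub_mem_orderLE (h : SasanoSystem α₀ α₁ α₃ f q₁ p₁ q₂ p₂)
    (H : SasanoSystem α₀ α₁ α₃ F Q₁ P₁ Q₂ P₂) (hq₁ : q₁ - Q₁ ∈ orderLE n)
    (hq₂ : q₂ - Q₂ ∈ orderLE n) (hp₁ : p₁ - P₁ ∈ orderLE n) (hp₂ : p₂ - P₂ ∈ orderLE n) :
    f - F ∈ orderLE n := by
  have sub_eq : f - F = 2 * ((q₁ - Q₁) * p₁ + Q₁ * (p₁ - P₁)
      + ((q₂ - Q₂) * p₂ + Q₂ * (p₂ - P₂))) := by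
    rw [h.f_eq, H.f_eq]
    ring
  rw [sub_eq]
  exact ofNat_mul_mem_orderLE 2 (add_mem
    (add_mem (mul_mem_orderLE hq₁ h.swap.p₂_mem_orderLE (by lia))
      (mul_mem_orderLE H.q₁_mem_orderLE hp₁ (by lia)))
    (add_mem (mul_mem_orderLE hq₂ h.p₂_mem_orderLE (by lia))
      (mul_mem_orderLE H.swap.q₁_mem_orderLE hp₂ (by lia))))

theorem two_mul_q₁_sub_sub_f_sub_mem_orderLE (h : SasanoSystem α₀ α₁ α₃ f q₁ p₁ q₂ p₂)
    (H : SasanoSystem α₀ α₁ α₃ F Q₁ P₁ Q₂ P₂) (hq₁ : q₁ - Q₁ ∈ orderLE n)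
    (hf : f - F ∈ orderLE n) (hp₁ : p₁ - P₁ ∈ orderLE (n - 1)) :
    2 * (q₁ - Q₁) - (f - F) ∈ orderLE (n - 1) := by
  have sub_eq : 2 * (q₁ - Q₁) - (f - F) =
      4 * (eulerDerivation (p₁ - P₁) - (p₁ - P₁) * (2 * q₁ - f))
        - (4 * P₁ - 1) * (2 * (q₁ - Q₁) - (f - F)) := by
    rw [map_sub, h.euler_p₁, H.euler_p₁]
    ring
  rw [sub_eq]
  refine sub_mem (ofNat_mul_mem_orderLE 4 (sub_mem (eulerDerivation_mem_orderLE hp₁) ?_)) ?_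
  · exact mul_mem_orderLE hp₁
      (sub_mem (ofNat_mul_mem_orderLE 2 h.q₁_mem_orderLE) h.f_mem_orderLE) (by lia)
  · exact mul_mem_orderLE H.swap.four_mul_p₂_sub_one_mem_orderLE
      (sub_mem (ofNat_mul_mem_orderLE 2 hq₁) hf) (by lia)

theorem two_mul_f_sub_sub_q_sub_mem_orderLE (h : SasanoSystem α₀ α₁ α₃ f q₁ p₁ q₂ p₂)
    (H : SasanoSystem α₀ α₁ α₃ F Q₁ P₁ Q₂ P₂) (hq₁ : q₁ - Q₁ ∈ orderLE n)
    (hq₂ : q₂ - Q₂ ∈ orderLE n) (hp₁ : p₁ - P₁ ∈ orderLE (n - 1))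
    (hp₂ : p₂ - P₂ ∈ orderLE (n - 1)) :
    2 * (f - F) - (q₁ - Q₁) - (q₂ - Q₂) ∈ orderLE (n - 1) := by
  have sub_eq : 2 * (f - F) - (q₁ - Q₁) - (q₂ - Q₂) =
      (q₁ - Q₁) * (4 * p₁ - 1) + (q₂ - Q₂) * (4 * p₂ - 1)
        + 4 * (Q₁ * (p₁ - P₁) + Q₂ * (p₂ - P₂)) := by
    rw [h.f_eq, H.f_eq]
    ring
  rw [sub_eq]
  exact add_mem
    (add_mem (mul_mem_orderLE hq₁ h.swap.four_mul_p₂_sub_one_mem_orderLE (by lia))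
      (mul_mem_orderLE hq₂ h.four_mul_p₂_sub_one_mem_orderLE (by lia)))
    (ofNat_mul_mem_orderLE 4 (add_mem (mul_mem_orderLE H.q₁_mem_orderLE hp₁ (by lia))
      (mul_mem_orderLE H.swap.q₁_mem_orderLE hp₂ (by lia))))

theorem q₁_sub_mem_orderLE_pred (h : SasanoSystem α₀ α₁ α₃ f q₁ p₁ q₂ p₂)
    (H : SasanoSystem α₀ α₁ α₃ F Q₁ P₁ Q₂ P₂) (hq₁ : q₁ - Q₁ ∈ orderLE n)
    (hq₂ : q₂ - Q₂ ∈ orderLE n) (hf : f - F ∈ orderLE n) : q₁ - Q₁ ∈ orderLE (n - 1) := by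
  have hp₂ := h.p₂_sub_mem_orderLE H hq₁ hf
  have hp₁ := h.swap.p₂_sub_mem_orderLE H.swap hq₂ hf
  have hq₁f := h.two_mul_q₁_sub_sub_f_sub_mem_orderLE H hq₁ hf hp₁
  have hq₂f := h.swap.two_mul_q₁_sub_sub_f_sub_mem_orderLE H.swap hq₂ hf hp₂
  have hfq := h.two_mul_f_sub_sub_q_sub_mem_orderLE H hq₁ hq₂ hp₁ hp₂
  refine mem_orderLE_of_four_mul_mem ?_
  have combination : 4 * (q₁ - Q₁) = 3 * (2 * (q₁ - Q₁) - (f - F)) + (2 * (q₂ - Q₂) - (f - F))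
      + 2 * (2 * (f - F) - (q₁ - Q₁) - (q₂ - Q₂)) := by
    ring
  rw [combination]
  exact add_mem (add_mem (ofNat_mul_mem_orderLE 3 hq₁f) hq₂f) (ofNat_mul_mem_orderLE 2 hfq)

theorem sub_mem_orderLE_neg (h : SasanoSystem α₀ α₁ α₃ f q₁ p₁ q₂ p₂)
    (H : SasanoSystem α₀ α₁ α₃ F Q₁ P₁ Q₂ P₂) (k : ℕ) :
    q₁ - Q₁ ∈ orderLE (-k : ℤ) ∧ q₂ - Q₂ ∈ orderLE (-k : ℤ) ∧ f - F ∈ orderLE (-k : ℤ) := by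
  induction k with
  | zero =>
    simpa using ⟨sub_mem h.q₁_mem_orderLE H.q₁_mem_orderLE,
      sub_mem h.swap.q₁_mem_orderLE H.swap.q₁_mem_orderLE, sub_mem h.f_mem_orderLE H.f_mem_orderLE⟩
  | succ k ih =>
    obtain ⟨hq₁, hq₂, hf⟩ := ih
    rw [show (-(k + 1 : ℕ) : ℤ) = -k - 1 by lia]
    have hq₁' := h.q₁_sub_mem_orderLE_pred H hq₁ hq₂ hf
    have hq₂' := h.swap.q₁_sub_mem_orderLE_pred H.swap hq₂ hq₁ hf
    exact ⟨hq₁', hq₂', h.f_sub_mem_orderLE H hq₁' hq₂' (h.swap.p₂_sub_mem_orderLE H.swap hq₂ hf)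
      (h.p₂_sub_mem_orderLE H hq₁ hf)⟩

theorem q₁_eq (h : SasanoSystem α₀ α₁ α₃ f q₁ p₁ q₂ p₂)
    (H : SasanoSystem α₀ α₁ α₃ F Q₁ P₁ Q₂ P₂) : q₁ = Q₁ :=
  sub_eq_zero.1 (eq_zero_of_forall_mem_orderLE fun k => (h.sub_mem_orderLE_neg H k).1)

theorem p₂_eq (h : SasanoSystem α₀ α₁ α₃ f q₁ p₁ q₂ p₂)
    (H : SasanoSystem α₀ α₁ α₃ F Q₁ P₁ Q₂ P₂) : p₂ = P₂ := by
  refine sub_eq_zero.1 (eq_zero_of_forall_mem_orderLE fun k => ?_)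
  obtain ⟨hq₁, -, hf⟩ := h.sub_mem_orderLE_neg H k
  exact orderLE_mono (by lia) (h.p₂_sub_mem_orderLE H hq₁ hf)

end SasanoSystem

end SasanoSystem

section Evaluation

variable {a0 a1 a3 : ℂ} {q1 p1 q2 p2 : RatFunc ℂ}

theorem evR_eq_eval (f : RatFunc ℂ) (t : ℂ) : evR f t = f.eval (RingHom.id ℂ) t := by
  simp [evR, RatFunc.eval, eval₂_id]

theorem evR_C (c : ℂ) : evR (RatFunc.C c) = fun _ => c := by
  ext t
  simp [evR_eq_eval]

theorem eventually_noPoleAt (f : RatFunc ℂ) : ∀ᶠ t in cofinite, NoPoleAt f t :=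
  eventually_cofinite_not_isRoot f.denom_ne_zero

/-- The germ of a rational function along the cofinite filter, that is, its values up to finitely
many points. Working with germs makes evaluation a ring homomorphism, since the values of `evR` at
the poles are junk. -/
noncomputable def evGerm : RatFunc ℂ →+* (cofinite : Filter ℂ).Germ ℂ where
  toFun f := (evR f : (cofinite : Filter ℂ).Germ ℂ)
  map_zero' := congrArg _ (by simpa using evR_C 0)
  map_one' := congrArg _ (by simpa using evR_C 1)
  map_add' f g := Germ.coe_eq.2 <| by
    filter_upwards [eventually_noPoleAt f, eventually_noPoleAt g] with t hf hg
    change _ = evR f t + evR g t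
    rw [evR_eq_eval, evR_eq_eval, evR_eq_eval]
    exact RatFunc.eval_add _ t (eval₂_id.trans_ne hf) (eval₂_id.trans_ne hg)
  map_mul' f g := Germ.coe_eq.2 <| by
    filter_upwards [eventually_noPoleAt f, eventually_noPoleAt g] with t hf hg
    change _ = evR f t * evR g t
    rw [evR_eq_eval, evR_eq_eval, evR_eq_eval]
    exact RatFunc.eval_mul _ t (eval₂_id.trans_ne hf) (eval₂_id.trans_ne hg)

theorem evGerm_apply (f : RatFunc ℂ) : evGerm f = (evR f : (cofinite : Filter ℂ).Germ ℂ) := rfl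

theorem evGerm_algebraMap (p : ℂ[X]) :
    evGerm (algebraMap ℂ[X] (RatFunc ℂ) p) = ((fun t => p.eval t) : ℂ → ℂ) :=
  congrArg _ (_root_.funext fun t => by simp [evR_eq_eval])

theorem evGerm_C (c : ℂ) : evGerm (RatFunc.C c) = ((fun _ => c) : ℂ → ℂ) :=
  congrArg _ (evR_C c)

theorem evGerm_X : evGerm RatFunc.X = ((fun t => t) : ℂ → ℂ) :=
  congrArg _ (_root_.funext fun t => by simp [evR_eq_eval])

theorem evGerm_eulerDerivation (f : RatFunc ℂ) :
    evGerm (eulerDerivation f) = ((fun t => t * deriv (evR f) t) : ℂ → ℂ) := by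
  have key := congrArg evGerm (denom_mul_eulerDerivation f)
  rw [map_mul evGerm, map_sub evGerm, map_mul evGerm, evGerm_algebraMap, evGerm_algebraMap,
    evGerm_algebraMap, evGerm_apply, evGerm_apply] at key
  apply Germ.coe_eq.2
  filter_upwards [Germ.coe_eq.1 key, eventually_noPoleAt f] with t key hf
  have hderiv : HasDerivAt (evR f) _ t := (f.num.hasDerivAt t).div (f.denom.hasDerivAt t) hf
  replace hf : f.denom.eval t ≠ 0 := hf
  simp only [eval_mul, eval_X, evR] at key
  rw [hderiv.deriv, evR]
  field_simp at key ⊢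
  linear_combination key

theorem IsSasanoSol.sasanoSystem (h : IsSasanoSol a0 a1 a3 q1 p1 q2 p2) :
    SasanoSystem a0 a1 a3 (2 * (q1 * p1 + q2 * p2) + RatFunc.C (a0 + a1 + a3)) q1 p1 q2 p2 := by
  refine ⟨rfl, ?_, ?_, ?_, ?_⟩ <;> apply evGerm.injective <;>
    simp only [evGerm_eulerDerivation, map_add evGerm, map_sub evGerm, map_mul evGerm,
      map_ofNat evGerm, map_one evGerm, evGerm_C, evGerm_X] <;>
    refine Germ.coe_eq.2 ?_ <;>
    filter_upwards [eventually_noPoleAt q1, eventually_noPoleAt p1, eventually_noPoleAt q2,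
      eventually_noPoleAt p2] with t hq1 hp1 hq2 hp2 <;>
    obtain ⟨eq1, ep1, eq2, ep2⟩ := h t hq1 hp1 hq2 hp2 <;>
    simp only [Pi.natCast_apply, Nat.cast_ofNat]
  · linear_combination eq1
  · linear_combination ep1
  · linear_combination eq2
  · linear_combination ep2

theorem isSasanoSol_zero_one_div_four_iff :
    IsSasanoSol a0 a1 a3 0 (RatFunc.C (1 / 4)) 0 (RatFunc.C (1 / 4)) ↔
      a0 = a3 / 2 ∧ a1 = a3 / 2 := by
  have evR_zero : evR 0 = fun _ => 0 := by simpa using evR_C 0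
  simp only [IsSasanoSol, NoPoleAt, RatFunc.denom_zero, RatFunc.denom_C, eval_one, ne_eq,
    one_ne_zero, not_false_eq_true, forall_const, evR_zero, evR_C, deriv_const]
  constructor
  · intro h
    obtain ⟨-, hp1, -, hp2⟩ := h 0
    exact ⟨by linear_combination (-3 / 2) * hp1 - (1 / 2) * hp2,
      by linear_combination (-1 / 2) * hp1 - (3 / 2) * hp2⟩
  · rintro ⟨h0, h1⟩ t
    subst h0 h1
    exact ⟨by ring, by ring, by ring, by ring⟩

end Evaluation

theorem sasano_standard_rational_solution_general (a0 a1 a3 : ℂ) :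
    (IsSasanoSol a0 a1 a3 0 (RatFunc.C (1 / 4)) 0 (RatFunc.C (1 / 4)) ↔
      a0 = a3 / 2 ∧ a1 = a3 / 2) ∧
    ∀ q1 p1 q2 p2 Q1 P1 Q2 P2 : RatFunc ℂ, IsSasanoSol a0 a1 a3 q1 p1 q2 p2 →
      IsSasanoSol a0 a1 a3 Q1 P1 Q2 P2 → q1 = Q1 ∧ p1 = P1 ∧ q2 = Q2 ∧ p2 = P2 := by
  refine ⟨isSasanoSol_zero_one_div_four_iff, fun q1 p1 q2 p2 Q1 P1 Q2 P2 hq hQ => ?_⟩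
  have h := hq.sasanoSystem
  have H := hQ.sasanoSystem
  exact ⟨h.q₁_eq H, h.swap.p₂_eq H.swap, h.swap.q₁_eq H.swap, h.p₂_eq H⟩

theorem sasano_standard_rational_solution (a0 a1 a2 a3 : ℂ)
    (h0 : a0 = a3 / 2) (h1 : a1 = a3 / 2) (h2 : a2 = 1 / 4 - a3) :
    IsSasanoSol a0 a1 a3 0 (RatFunc.C (1 / 4)) 0 (RatFunc.C (1 / 4)) ∧
    ∀ q1 p1 q2 p2 : RatFunc ℂ, IsSasanoSol a0 a1 a3 q1 p1 q2 p2 →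
      q1 = 0 ∧ p1 = RatFunc.C (1 / 4) ∧ q2 = 0 ∧ p2 = RatFunc.C (1 / 4) := by
  obtain ⟨constant_iff, unique⟩ := sasano_standard_rational_solution_general a0 a1 a3
  have constant := constant_iff.2 ⟨h0, h1⟩
  exact ⟨constant, fun q1 p1 q2 p2 h => unique q1 p1 q2 p2 _ _ _ _ h constant⟩
end

section
/- For each fixed parameter tuple, the Sasano system has at most one rational solution: if (q1,p1,q2,p2) and (q̃1,p̃1,q̃2,p̃2) are both rational solutions of A5^(2)(α0,α1,α2,α3), then q1 = q̃1, p1 = p̃1, q2 = q̃2 and p2 = p̃2 as rational functions. -/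
open Filter Topology Polynomial

/-!
Everything happens at `t = ∞`, where `f = O(tⁿ)` implies `t f' = O(tⁿ)`. Comparing degrees in the
equations excludes a growing `q₁` or `q₂` and a `p₁` or `p₂` that tends to `0`, and leaves
`qᵢ = O(1)` and `pᵢ = 1/4 + O(1/t)` as the only possible behaviour. Let `δ` denote the difference
of two solutions and suppose that it is `O(tⁿ)`. The `q`-equations carry the terms `4 t p₁` and
`4 t p₂`, so `δp₁` and `δp₂` are `O(tⁿ⁻¹)`; modulo `O(tⁿ⁻¹)` the `p`-equations then become
`δS - 2 δqᵢ ≡ 0`, where `S = 2 q₁ p₁ + 2 q₂ p₂ + s` satisfies `2 δS ≡ δq₁ + δq₂`. This linear system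
is nondegenerate, so the difference is `O(tⁿ⁻¹)`, and by induction it vanishes.
-/

section Filtration

open WithZero

variable {F : Type*} [Field F] {v : Valuation F ℤᵐ⁰} {f g c : F} {m n k : ℤ}

/-- The elements of degree at most `n`, where the degree is the logarithm of a discrete
valuation `v`; for the valuation at infinity of `K(t)` these are the `f` with `f = O(tⁿ)`. -/
def degLE (v : Valuation F ℤᵐ⁰) (n : ℤ) : AddSubgroup F := v.leAddSubgroup (exp n)

lemma mem_degLE : f ∈ degLE v n ↔ v f ≤ exp n := Iff.rfl

lemma degLE_mono (hf : f ∈ degLE v m) (h : m ≤ n := by omega) : f ∈ degLE v n :=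
  hf.trans (exp_le_exp.2 h)

lemma mul_mem_degLE (hf : f ∈ degLE v m) (hg : g ∈ degLE v k) (h : m + k ≤ n := by omega) :
    f * g ∈ degLE v n := by
  refine degLE_mono ?_ h
  rw [mem_degLE, map_mul, exp_add]
  exact mul_le_mul' hf hg

lemma ofNat_mul_mem_degLE (k : ℕ) [k.AtLeastTwo] (hf : f ∈ degLE v n) :
    ofNat(k) * f ∈ degLE v n := by
  rw [← Nat.cast_ofNat, ← nsmul_eq_mul]
  exact nsmul_mem hf _

lemma mem_degLE_of_mul_mem (hc : v c = exp k) (h : c * f ∈ degLE v n)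
    (hn : n ≤ m + k := by omega) : f ∈ degLE v m := by
  have hle : exp k * v f ≤ exp k * exp m := by
    rw [← hc, ← map_mul, hc, ← exp_add, add_comm]
    exact degLE_mono h hn
  exact (mul_le_mul_iff_right₀ exp_pos).1 hle

lemma coe_integer_mem_degLE (c : v.integer) : (c : F) ∈ degLE v 0 := c.2

lemma exists_valuation_eq_exp_of_notMem (hf : f ∉ degLE v n) : ∃ m, n < m ∧ v f = exp m := by
  have hlt : exp n < v f := not_le.1 hf
  have hne : v f ≠ 0 := (exp_pos.trans hlt).ne'
  exact ⟨log (v f), exp_lt_exp.1 (by rwa [exp_log hne]), (exp_log hne).symm⟩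

lemma eq_zero_of_forall_mem_degLE (h : ∀ k : ℕ, f ∈ degLE v (-k)) : f = 0 := by
  by_contra hf
  have hne : v f ≠ 0 := (Valuation.ne_zero_iff v).2 hf
  have hle := h ((log (v f)).natAbs + 1)
  rw [mem_degLE, ← log_le_iff_le_exp hne] at hle
  omega

end Filtration

section AbstractSystem

open WithZero

variable {F : Type*} [Field F] {v : Valuation F ℤᵐ⁰} {θ : F →+ F} {t : F} {s a b : v.integer}
  {q₁ p₁ q₂ p₂ S q₁' p₁' q₂' p₂' S' f : F} {m n : ℤ}

/-- The properties of `v = exp ∘ deg`, `θ = t d/dt` and the variable `t` on `K(t)` that govern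
the behaviour of solutions of the Sasano system at `t = ∞`. -/
structure IsDegreeAtInfty (v : Valuation F ℤᵐ⁰) (θ : F →+ F) (t : F) : Prop where
  map_two : v 2 = 1
  map_var : v t = exp 1
  map_euler_le (f : F) : v (θ f) ≤ v f

namespace IsDegreeAtInfty

lemma map_four (hv : IsDegreeAtInfty v θ t) : v 4 = exp 0 := by
  rw [show (4 : F) = 2 * 2 by norm_num, map_mul, hv.map_two, one_mul, exp_zero]

lemma var_mem (hv : IsDegreeAtInfty v θ t) : t ∈ degLE v 1 := hv.map_var.le

lemma euler_mem (hv : IsDegreeAtInfty v θ t) (hf : f ∈ degLE v n) : θ f ∈ degLE v n :=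
  (hv.map_euler_le f).trans hf

lemma mem_of_two_mul_mem (hv : IsDegreeAtInfty v θ t) (h : 2 * f ∈ degLE v n) :
    f ∈ degLE v n :=
  mem_degLE_of_mul_mem (hv.map_two.trans exp_zero.symm) h

lemma mem_of_four_mul_mem (hv : IsDegreeAtInfty v θ t) (h : 4 * f ∈ degLE v n) :
    f ∈ degLE v n :=
  mem_degLE_of_mul_mem hv.map_four h

lemma mem_of_var_mul_mem (hv : IsDegreeAtInfty v θ t) (h : t * f ∈ degLE v n) :
    f ∈ degLE v (n - 1) :=
  mem_degLE_of_mul_mem hv.map_var h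

end IsDegreeAtInfty

/-- Solutions of the Sasano system in a valued field with an operator `θ` in the role of
`t d/dt`, for integral parameters `s = α₀ + α₁ + α₃`, `a = α₀` and `b = α₁`. The combination
`S = 2 q₁ p₁ + 2 q₂ p₂ + s` is kept as an extra unknown, so that exchanging the indices `1`
and `2` only permutes the equations. -/
structure IsAbstractSasanoSol (θ : F →+ F) (t : F) (s a b : v.integer) (q₁ p₁ q₂ p₂ S : F) :
    Prop where
  S_eq : S = 2 * (q₁ * p₁) + 2 * (q₂ * p₂) + s
  euler_q₁ : θ q₁ = q₁ * (S - q₁) - t + 4 * (t * p₂)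
  euler_p₁ : θ p₁ = a - p₁ * (S - 2 * q₁)
  euler_q₂ : θ q₂ = q₂ * (S - q₂) - t + 4 * (t * p₁)
  euler_p₂ : θ p₂ = b - p₂ * (S - 2 * q₂)

namespace IsAbstractSasanoSol

lemma swap (h : IsAbstractSasanoSol θ t s a b q₁ p₁ q₂ p₂ S) :
    IsAbstractSasanoSol θ t s b a q₂ p₂ q₁ p₁ S where
  S_eq := by rw [h.S_eq, add_comm (2 * (q₁ * p₁))]
  euler_q₁ := h.euler_q₂
  euler_p₁ := h.euler_p₂
  euler_q₂ := h.euler_q₁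
  euler_p₂ := h.euler_p₁

lemma p₁_mem_of_notMem (hv : IsDegreeAtInfty v θ t)
    (h : IsAbstractSasanoSol θ t s a b q₁ p₁ q₂ p₂ S) (hw : S - 2 * q₁ ∉ degLE v 0) :
    p₁ ∈ degLE v (-1) := by
  by_contra hp
  obtain ⟨m, hm, hvm⟩ := exists_valuation_eq_exp_of_notMem hp
  refine hw (mem_degLE_of_mul_mem hvm (n := m) ?_)
  rw [show p₁ * (S - 2 * q₁) = a - θ p₁ by rw [h.euler_p₁]; ring]
  exact sub_mem (degLE_mono (coe_integer_mem_degLE a)) (hv.euler_mem hvm.le)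

lemma q₁_mem_or_sub_mem (hv : IsDegreeAtInfty v θ t)
    (h : IsAbstractSasanoSol θ t s a b q₁ p₁ q₂ p₂ S) (hp₂ : p₂ ∈ degLE v (-1)) :
    q₁ ∈ degLE v 0 ∨ S - q₁ ∈ degLE v 0 := by
  refine or_iff_not_imp_left.2 fun hq ↦ ?_
  obtain ⟨m, hm, hvm⟩ := exists_valuation_eq_exp_of_notMem hq
  refine mem_degLE_of_mul_mem hvm (n := m) ?_
  rw [show q₁ * (S - q₁) = θ q₁ + t - 4 * (t * p₂) by rw [h.euler_q₁]; ring]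
  exact sub_mem (add_mem (hv.euler_mem hvm.le) (degLE_mono hv.var_mem))
    (ofNat_mul_mem_degLE 4 (mul_mem_degLE hv.var_mem hp₂))

lemma sub_notMem_of_q₁_mem (hv : IsDegreeAtInfty v θ t)
    (h : IsAbstractSasanoSol θ t s a b q₁ p₁ q₂ p₂ S) (hp₂ : p₂ ∈ degLE v (-1))
    (hq : q₁ ∈ degLE v 0) : S - q₁ ∉ degLE v 0 := by
  intro hSq
  have ht : t ∈ degLE v 0 := by
    rw [show t = q₁ * (S - q₁) + 4 * (t * p₂) - θ q₁ by rw [h.euler_q₁]; ring]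
    exact sub_mem (add_mem (mul_mem_degLE hq hSq)
      (ofNat_mul_mem_degLE 4 (mul_mem_degLE hv.var_mem hp₂))) (hv.euler_mem hq)
  rw [mem_degLE, hv.map_var, exp_le_exp] at ht
  omega

lemma sub_two_mul_q₁_notMem (hv : IsDegreeAtInfty v θ t)
    (h : IsAbstractSasanoSol θ t s a b q₁ p₁ q₂ p₂ S) (hp₂ : p₂ ∈ degLE v (-1)) :
    S - 2 * q₁ ∉ degLE v 0 := by
  intro hw
  rcases h.q₁_mem_or_sub_mem hv hp₂ with hq | hSq
  · refine h.sub_notMem_of_q₁_mem hv hp₂ hq ?_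
    rw [show S - q₁ = (S - 2 * q₁) + q₁ by ring]
    exact add_mem hw hq
  · refine h.sub_notMem_of_q₁_mem hv hp₂ ?_ hSq
    rw [show q₁ = (S - q₁) - (S - 2 * q₁) by ring]
    exact sub_mem hSq hw

lemma q₁_mul_p₁_mem (hv : IsDegreeAtInfty v θ t)
    (h : IsAbstractSasanoSol θ t s a b q₁ p₁ q₂ p₂ S) (hp₁ : p₁ ∈ degLE v (-1))
    (hp₂ : p₂ ∈ degLE v (-1)) : q₁ * p₁ ∈ degLE v 0 := by
  rcases h.q₁_mem_or_sub_mem hv hp₂ with hq | hSq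
  · exact mul_mem_degLE hq hp₁
  · rw [show q₁ * p₁ = p₁ * (S - q₁) - (a - θ p₁) by rw [h.euler_p₁]; ring]
    exact sub_mem (mul_mem_degLE hp₁ hSq)
      (sub_mem (coe_integer_mem_degLE a) (hv.euler_mem (degLE_mono hp₁)))

lemma p₁_notMem (hv : IsDegreeAtInfty v θ t)
    (h : IsAbstractSasanoSol θ t s a b q₁ p₁ q₂ p₂ S) : p₁ ∉ degLE v (-1) := by
  intro hp₁
  have hp₂ : p₂ ∈ degLE v (-1) :=
    h.swap.p₁_mem_of_notMem hv (h.swap.sub_two_mul_q₁_notMem hv hp₁)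
  have hS : S ∈ degLE v 0 := by
    rw [h.S_eq]
    exact add_mem (add_mem (ofNat_mul_mem_degLE 2 (h.q₁_mul_p₁_mem hv hp₁ hp₂))
      (ofNat_mul_mem_degLE 2 (h.swap.q₁_mul_p₁_mem hv hp₂ hp₁))) (coe_integer_mem_degLE s)
  rcases h.q₁_mem_or_sub_mem hv hp₂ with hq | hSq
  · exact h.sub_notMem_of_q₁_mem hv hp₂ hq (sub_mem hS hq)
  · refine h.sub_notMem_of_q₁_mem hv hp₂ ?_ hSq
    simpa using sub_mem hS hSq

lemma sub_two_mul_q₁_mem (hv : IsDegreeAtInfty v θ t)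
    (h : IsAbstractSasanoSol θ t s a b q₁ p₁ q₂ p₂ S) : S - 2 * q₁ ∈ degLE v 0 := by
  by_contra hw
  exact h.p₁_notMem hv (h.p₁_mem_of_notMem hv hw)

lemma q₁_sq_add_mem (hv : IsDegreeAtInfty v θ t)
    (h : IsAbstractSasanoSol θ t s a b q₁ p₁ q₂ p₂ S) (hm : 1 ≤ m) (hq : q₁ ∈ degLE v m) :
    q₁ * q₁ + 4 * (t * p₂) ∈ degLE v m := by
  rw [show q₁ * q₁ + 4 * (t * p₂) = θ q₁ + t - q₁ * (S - 2 * q₁) by rw [h.euler_q₁]; ring]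
  exact sub_mem (add_mem (hv.euler_mem hq) (degLE_mono hv.var_mem))
    (mul_mem_degLE hq (h.sub_two_mul_q₁_mem hv))

-- `4tS` has degree at most `m + 1`, while substituting `4tp₂ ≈ -q₁²`, `4tp₁ ≈ -q₂²` and
-- `q₂ ≈ q₁` into `4tS = 8tq₁p₁ + 8tq₂p₂ + 4ts` makes it `≈ -4q₁³`.
lemma q₁_cube_mem (hv : IsDegreeAtInfty v θ t)
    (h : IsAbstractSasanoSol θ t s a b q₁ p₁ q₂ p₂ S) (hm : 1 ≤ m) (hq₁ : q₁ ∈ degLE v m) :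
    q₁ * (q₁ * q₁) ∈ degLE v (2 * m) := by
  have hw₁ := h.sub_two_mul_q₁_mem hv
  have he : q₂ - q₁ ∈ degLE v 0 := by
    refine hv.mem_of_two_mul_mem ?_
    rw [show 2 * (q₂ - q₁) = (S - 2 * q₁) - (S - 2 * q₂) by ring]
    exact sub_mem hw₁ (h.swap.sub_two_mul_q₁_mem hv)
  have hq₂ : q₂ ∈ degLE v m := by
    rw [← add_sub_cancel q₁ q₂]
    exact add_mem hq₁ (degLE_mono he)
  have hS : S ∈ degLE v m := by
    rw [← sub_add_cancel S (2 * q₁)]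
    exact add_mem (degLE_mono hw₁) (ofNat_mul_mem_degLE 2 hq₁)
  have hbalance : 4 * (q₁ * (q₁ * q₁)) =
      2 * (q₁ * (q₂ * q₂ + 4 * (t * p₁))) + 2 * (q₂ * (q₁ * q₁ + 4 * (t * p₂)))
        + 4 * (t * (s - S)) - 2 * (q₁ * ((3 * q₁ + (q₂ - q₁)) * (q₂ - q₁))) := by
    rw [h.S_eq]; ring
  refine hv.mem_of_four_mul_mem ?_
  rw [hbalance]
  have hq₁_balance : q₁ * (q₂ * q₂ + 4 * (t * p₁)) ∈ degLE v (2 * m) :=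
    mul_mem_degLE hq₁ (h.swap.q₁_sq_add_mem hv hm hq₂)
  have hq₂_balance : q₂ * (q₁ * q₁ + 4 * (t * p₂)) ∈ degLE v (2 * m) :=
    mul_mem_degLE hq₂ (h.q₁_sq_add_mem hv hm hq₁)
  have htS : t * (s - S) ∈ degLE v (2 * m) :=
    mul_mem_degLE hv.var_mem (sub_mem (degLE_mono (coe_integer_mem_degLE s)) hS)
  have hq₁e : q₁ * ((3 * q₁ + (q₂ - q₁)) * (q₂ - q₁)) ∈ degLE v (2 * m) :=
    mul_mem_degLE hq₁ (mul_mem_degLE (n := m)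
      (add_mem (ofNat_mul_mem_degLE 3 hq₁) (degLE_mono he)) he)
  exact sub_mem (add_mem (add_mem (ofNat_mul_mem_degLE 2 hq₁_balance)
    (ofNat_mul_mem_degLE 2 hq₂_balance)) (ofNat_mul_mem_degLE 4 htS)) (ofNat_mul_mem_degLE 2 hq₁e)

lemma q₁_mem (hv : IsDegreeAtInfty v θ t)
    (h : IsAbstractSasanoSol θ t s a b q₁ p₁ q₂ p₂ S) : q₁ ∈ degLE v 0 := by
  by_contra hq
  obtain ⟨m, hm, hvm⟩ := exists_valuation_eq_exp_of_notMem hq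
  have hcube := h.q₁_cube_mem hv hm hvm.le
  rw [mem_degLE, map_mul, map_mul, hvm, ← exp_add, ← exp_add, exp_le_exp] at hcube
  omega

lemma four_mul_p₂_sub_one_mem_of_S_mem (hv : IsDegreeAtInfty v θ t)
    (h : IsAbstractSasanoSol θ t s a b q₁ p₁ q₂ p₂ S) (hn : 0 ≤ n) (hS : S ∈ degLE v n) :
    4 * p₂ - 1 ∈ degLE v (n - 1) := by
  refine hv.mem_of_var_mul_mem ?_
  have hq := h.q₁_mem hv
  rw [show t * (4 * p₂ - 1) = θ q₁ - q₁ * (S - q₁) by rw [h.euler_q₁]; ring]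
  exact sub_mem (hv.euler_mem (degLE_mono hq))
    (mul_mem_degLE hq (sub_mem hS (degLE_mono hq)))

lemma p₂_mem_of_S_mem (hv : IsDegreeAtInfty v θ t)
    (h : IsAbstractSasanoSol θ t s a b q₁ p₁ q₂ p₂ S) (hn : 0 ≤ n) (hS : S ∈ degLE v (n + 1)) :
    p₂ ∈ degLE v n := by
  refine hv.mem_of_four_mul_mem ?_
  rw [← sub_add_cancel (4 * p₂) 1]
  exact add_mem (degLE_mono (h.four_mul_p₂_sub_one_mem_of_S_mem hv (by omega) hS))
    (degLE_mono (coe_integer_mem_degLE 1))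

lemma S_mem (hv : IsDegreeAtInfty v θ t)
    (h : IsAbstractSasanoSol θ t s a b q₁ p₁ q₂ p₂ S) : S ∈ degLE v 0 := by
  by_contra hS
  obtain ⟨m, hm, hvm⟩ := exists_valuation_eq_exp_of_notMem hS
  have hS' : S ∈ degLE v (m - 1 + 1) := degLE_mono hvm.le
  have hlt : S ∈ degLE v (m - 1) := by
    rw [h.S_eq]
    exact add_mem (add_mem
      (ofNat_mul_mem_degLE 2 (mul_mem_degLE (h.q₁_mem hv)
        (h.swap.p₂_mem_of_S_mem hv (by omega) hS')))
      (ofNat_mul_mem_degLE 2 (mul_mem_degLE (h.swap.q₁_mem hv)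
        (h.p₂_mem_of_S_mem hv (by omega) hS')))) (degLE_mono (coe_integer_mem_degLE s))
  rw [mem_degLE, hvm, exp_le_exp] at hlt
  omega

lemma p₂_mem (hv : IsDegreeAtInfty v θ t)
    (h : IsAbstractSasanoSol θ t s a b q₁ p₁ q₂ p₂ S) : p₂ ∈ degLE v 0 :=
  h.p₂_mem_of_S_mem hv le_rfl (degLE_mono (h.S_mem hv))

lemma four_mul_p₂_sub_one_mem (hv : IsDegreeAtInfty v θ t)
    (h : IsAbstractSasanoSol θ t s a b q₁ p₁ q₂ p₂ S) : 4 * p₂ - 1 ∈ degLE v (-1) :=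
  h.four_mul_p₂_sub_one_mem_of_S_mem hv le_rfl (h.S_mem hv)

lemma S_sub_mem (hv : IsDegreeAtInfty v θ t)
    (h : IsAbstractSasanoSol θ t s a b q₁ p₁ q₂ p₂ S)
    (h' : IsAbstractSasanoSol θ t s a b q₁' p₁' q₂' p₂' S')
    (hq₁ : q₁ - q₁' ∈ degLE v n) (hp₁ : p₁ - p₁' ∈ degLE v n)
    (hq₂ : q₂ - q₂' ∈ degLE v n) (hp₂ : p₂ - p₂' ∈ degLE v n) : S - S' ∈ degLE v n := by
  rw [show S - S' = 2 * (q₁ * (p₁ - p₁') + (q₁ - q₁') * p₁')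
      + 2 * (q₂ * (p₂ - p₂') + (q₂ - q₂') * p₂') by rw [h.S_eq, h'.S_eq]; ring]
  exact add_mem
    (ofNat_mul_mem_degLE 2
      (add_mem (mul_mem_degLE (h.q₁_mem hv) hp₁) (mul_mem_degLE hq₁ (h'.swap.p₂_mem hv))))
    (ofNat_mul_mem_degLE 2
      (add_mem (mul_mem_degLE (h.swap.q₁_mem hv) hp₂) (mul_mem_degLE hq₂ (h'.p₂_mem hv))))

lemma p₂_sub_mem (hv : IsDegreeAtInfty v θ t)
    (h : IsAbstractSasanoSol θ t s a b q₁ p₁ q₂ p₂ S)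
    (h' : IsAbstractSasanoSol θ t s a b q₁' p₁' q₂' p₂' S')
    (hq₁ : q₁ - q₁' ∈ degLE v n) (hS : S - S' ∈ degLE v n) : p₂ - p₂' ∈ degLE v (n - 1) := by
  refine hv.mem_of_var_mul_mem (hv.mem_of_four_mul_mem ?_)
  rw [show 4 * (t * (p₂ - p₂')) =
      θ (q₁ - q₁') - ((q₁ - q₁') * (S - q₁) + q₁' * ((S - S') - (q₁ - q₁'))) by
    rw [map_sub, h.euler_q₁, h'.euler_q₁]; ring]
  exact sub_mem (hv.euler_mem hq₁) (add_mem
    (mul_mem_degLE hq₁ (sub_mem (h.S_mem hv) (h.q₁_mem hv)))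
    (mul_mem_degLE (h'.q₁_mem hv) (sub_mem hS hq₁)))

-- The linearised `p₁`-equation, where `p₁' ≈ 1/4`.
lemma S_sub_sub_two_mul_mem (hv : IsDegreeAtInfty v θ t)
    (h : IsAbstractSasanoSol θ t s a b q₁ p₁ q₂ p₂ S)
    (h' : IsAbstractSasanoSol θ t s a b q₁' p₁' q₂' p₂' S')
    (hq₁ : q₁ - q₁' ∈ degLE v n) (hS : S - S' ∈ degLE v n)
    (hp₁ : p₁ - p₁' ∈ degLE v (n - 1)) :
    (S - S') - 2 * (q₁ - q₁') ∈ degLE v (n - 1) := by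
  have hd : (S - S') - 2 * (q₁ - q₁') ∈ degLE v n := sub_mem hS (ofNat_mul_mem_degLE 2 hq₁)
  rw [show (S - S') - 2 * (q₁ - q₁') =
      -(4 * (θ (p₁ - p₁') + (p₁ - p₁') * (S - 2 * q₁)))
        - (4 * p₁' - 1) * ((S - S') - 2 * (q₁ - q₁')) by
    rw [map_sub, h.euler_p₁, h'.euler_p₁]; ring]
  exact sub_mem (neg_mem (ofNat_mul_mem_degLE 4 (add_mem (hv.euler_mem hp₁)
    (mul_mem_degLE hp₁ (h.sub_two_mul_q₁_mem hv)))))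
    (mul_mem_degLE (h'.swap.four_mul_p₂_sub_one_mem hv) hd)

lemma two_mul_S_sub_sub_mem (hv : IsDegreeAtInfty v θ t)
    (h : IsAbstractSasanoSol θ t s a b q₁ p₁ q₂ p₂ S)
    (h' : IsAbstractSasanoSol θ t s a b q₁' p₁' q₂' p₂' S')
    (hq₁ : q₁ - q₁' ∈ degLE v n) (hp₁ : p₁ - p₁' ∈ degLE v (n - 1))
    (hq₂ : q₂ - q₂' ∈ degLE v n) (hp₂ : p₂ - p₂' ∈ degLE v (n - 1)) :
    2 * (S - S') - (q₁ - q₁') - (q₂ - q₂') ∈ degLE v (n - 1) := by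
  rw [show 2 * (S - S') - (q₁ - q₁') - (q₂ - q₂') =
      4 * (q₁ * (p₁ - p₁') + q₂ * (p₂ - p₂'))
        + ((4 * p₁' - 1) * (q₁ - q₁') + (4 * p₂' - 1) * (q₂ - q₂')) by
    rw [h.S_eq, h'.S_eq]; ring]
  exact add_mem
    (ofNat_mul_mem_degLE 4
      (add_mem (mul_mem_degLE (h.q₁_mem hv) hp₁) (mul_mem_degLE (h.swap.q₁_mem hv) hp₂)))
    (add_mem (mul_mem_degLE (h'.swap.four_mul_p₂_sub_one_mem hv) hq₁)
      (mul_mem_degLE (h'.four_mul_p₂_sub_one_mem hv) hq₂))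

lemma q₁_sub_mem (hv : IsDegreeAtInfty v θ t)
    (h : IsAbstractSasanoSol θ t s a b q₁ p₁ q₂ p₂ S)
    (h' : IsAbstractSasanoSol θ t s a b q₁' p₁' q₂' p₂' S')
    (hq₁ : q₁ - q₁' ∈ degLE v n) (hp₁ : p₁ - p₁' ∈ degLE v (n - 1))
    (hq₂ : q₂ - q₂' ∈ degLE v n) (hp₂ : p₂ - p₂' ∈ degLE v (n - 1))
    (hS : S - S' ∈ degLE v n) : q₁ - q₁' ∈ degLE v (n - 1) := by
  have hlin₁ := h.S_sub_sub_two_mul_mem hv h' hq₁ hS hp₁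
  have hlin₂ := h.swap.S_sub_sub_two_mul_mem hv h'.swap hq₂ hS hp₂
  have hlinS := h.two_mul_S_sub_sub_mem hv h' hq₁ hp₁ hq₂ hp₂
  refine hv.mem_of_four_mul_mem ?_
  rw [show 4 * (q₁ - q₁') = 2 * (2 * (S - S') - (q₁ - q₁') - (q₂ - q₂'))
      - 3 * ((S - S') - 2 * (q₁ - q₁')) - ((S - S') - 2 * (q₂ - q₂')) by ring]
  exact sub_mem (sub_mem (ofNat_mul_mem_degLE 2 hlinS) (ofNat_mul_mem_degLE 3 hlin₁)) hlin₂

lemma sub_mem_degLE_neg (hv : IsDegreeAtInfty v θ t)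
    (h : IsAbstractSasanoSol θ t s a b q₁ p₁ q₂ p₂ S)
    (h' : IsAbstractSasanoSol θ t s a b q₁' p₁' q₂' p₂' S') (k : ℕ) :
    q₁ - q₁' ∈ degLE v (-k) ∧ p₁ - p₁' ∈ degLE v (-k) ∧
      q₂ - q₂' ∈ degLE v (-k) ∧ p₂ - p₂' ∈ degLE v (-k) := by
  induction k with
  | zero =>
    exact ⟨sub_mem (h.q₁_mem hv) (h'.q₁_mem hv), sub_mem (h.swap.p₂_mem hv) (h'.swap.p₂_mem hv),
      sub_mem (h.swap.q₁_mem hv) (h'.swap.q₁_mem hv), sub_mem (h.p₂_mem hv) (h'.p₂_mem hv)⟩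
  | succ k ih =>
    obtain ⟨hq₁, hp₁, hq₂, hp₂⟩ := ih
    have hS := h.S_sub_mem hv h' hq₁ hp₁ hq₂ hp₂
    have hp₁_succ := h.swap.p₂_sub_mem hv h'.swap hq₂ hS
    have hp₂_succ := h.p₂_sub_mem hv h' hq₁ hS
    rw [Nat.cast_succ, neg_add']
    exact ⟨h.q₁_sub_mem hv h' hq₁ hp₁_succ hq₂ hp₂_succ hS, hp₁_succ,
      h.swap.q₁_sub_mem hv h'.swap hq₂ hp₂_succ hq₁ hp₁_succ hS, hp₂_succ⟩

end IsAbstractSasanoSol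

theorem sasano_rational_solution_unique_general (hv : IsDegreeAtInfty v θ t)
    (h : IsAbstractSasanoSol θ t s a b q₁ p₁ q₂ p₂ S)
    (h' : IsAbstractSasanoSol θ t s a b q₁' p₁' q₂' p₂' S') :
    q₁ = q₁' ∧ p₁ = p₁' ∧ q₂ = q₂' ∧ p₂ = p₂' := by
  have hsub := h.sub_mem_degLE_neg hv h'
  simp only [← sub_eq_zero (a := q₁), ← sub_eq_zero (a := p₁), ← sub_eq_zero (a := q₂),
    ← sub_eq_zero (a := p₂)]
  exact ⟨eq_zero_of_forall_mem_degLE fun k ↦ (hsub k).1,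
    eq_zero_of_forall_mem_degLE fun k ↦ (hsub k).2.1,
    eq_zero_of_forall_mem_degLE fun k ↦ (hsub k).2.2.1,
    eq_zero_of_forall_mem_degLE fun k ↦ (hsub k).2.2.2⟩

end AbstractSystem

section EulerDerivative

variable {K : Type*} [Field K]

lemma algebraMap_wronskian_div_sq {a b c d : K[X]} (hb : b ≠ 0) (hd : d ≠ 0)
    (h : a * d = c * b) :
    algebraMap K[X] (RatFunc K) (wronskian b a) / algebraMap K[X] (RatFunc K) b ^ 2 =
      algebraMap K[X] (RatFunc K) (wronskian d c) / algebraMap K[X] (RatFunc K) d ^ 2 := by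
  have hderiv := congrArg derivative h
  rw [derivative_mul, derivative_mul] at hderiv
  have hcross : wronskian b a * d ^ 2 = wronskian d c * b ^ 2 := by
    rw [wronskian, wronskian]
    linear_combination b * d * hderiv - (derivative b * d + b * derivative d) * h
  rw [div_eq_div_iff (pow_ne_zero 2 (RatFunc.algebraMap_ne_zero hb))
    (pow_ne_zero 2 (RatFunc.algebraMap_ne_zero hd))]
  exact_mod_cast congrArg (algebraMap K[X] (RatFunc K)) hcross

/-- The Euler derivative `X d/dX` on `K(X)`; the numerator `n' d - n d'` of the derivative of a
quotient `n / d` is the Wronskian of `d` and `n`. -/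
noncomputable def eulerDeriv : RatFunc K →+ RatFunc K :=
  AddMonoidHom.mk' (fun f ↦ RatFunc.X * (algebraMap K[X] (RatFunc K) (wronskian f.denom f.num) /
    algebraMap K[X] (RatFunc K) f.denom ^ 2)) fun f g ↦ by
    have hf := RatFunc.algebraMap_ne_zero f.denom_ne_zero
    have hg := RatFunc.algebraMap_ne_zero g.denom_ne_zero
    rw [algebraMap_wronskian_div_sq (f + g).denom_ne_zero
      (mul_ne_zero f.denom_ne_zero g.denom_ne_zero) (RatFunc.num_denom_add f g)]
    simp only [wronskian, derivative_mul, map_add, map_sub, map_mul]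
    field_simp
    ring

lemma eulerDeriv_apply (f : RatFunc K) :
    eulerDeriv f = RatFunc.X * (algebraMap K[X] (RatFunc K) (wronskian f.denom f.num) /
      algebraMap K[X] (RatFunc K) f.denom ^ 2) := rfl

lemma inftyValuation_eulerDeriv_le [DecidableEq (RatFunc K)] (f : RatFunc K) :
    RatFunc.inftyValuation K (eulerDeriv f) ≤ RatFunc.inftyValuation K f := by
  rcases eq_or_ne f 0 with rfl | hf
  · simp
  rcases eq_or_ne (wronskian f.denom f.num) 0 with hW | hW
  · simp [eulerDeriv_apply, hW]
  have hd := RatFunc.algebraMap_ne_zero f.denom_ne_zero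
  have hW' := RatFunc.algebraMap_ne_zero hW
  have hlt := natDegree_wronskian_lt_add hW
  have hθ : eulerDeriv f ≠ 0 :=
    mul_ne_zero RatFunc.X_ne_zero (div_ne_zero hW' (pow_ne_zero 2 hd))
  rw [RatFunc.inftyValuation_apply, RatFunc.inftyValuation_apply,
    RatFunc.inftyValuation_of_nonzero K hθ, RatFunc.inftyValuation_of_nonzero K hf,
    WithZero.exp_le_exp, eulerDeriv_apply,
    RatFunc.intDegree_mul RatFunc.X_ne_zero (div_ne_zero hW' (pow_ne_zero 2 hd)),
    RatFunc.intDegree_div hW' (pow_ne_zero 2 hd), ← map_pow, RatFunc.intDegree_polynomial,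
    RatFunc.intDegree_polynomial, RatFunc.intDegree_X, natDegree_pow, RatFunc.intDegree]
  push_cast
  omega

lemma isDegreeAtInfty_inftyValuation [DecidableEq (RatFunc K)] (h2 : (2 : K) ≠ 0) :
    IsDegreeAtInfty (RatFunc.inftyValuation K) eulerDeriv RatFunc.X where
  map_two := by simpa only [map_ofNat] using RatFunc.inftyValuation.C K h2
  map_var := RatFunc.inftyValuation.X K
  map_euler_le := inftyValuation_eulerDeriv_le

/-- A constant, as an element of the valuation ring at infinity. -/
noncomputable def constAtInfty [DecidableEq (RatFunc K)] (c : K) :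
    (RatFunc.inftyValuation K).integer :=
  ⟨RatFunc.C c, by
    rcases eq_or_ne c 0 with rfl | hc
    · simp
    · exact (RatFunc.inftyValuation.C K hc).le⟩

end EulerDerivative

section Evaluation

lemma eventually_eval_ne_zero {p : ℂ[X]} (hp : p ≠ 0) : ∀ᶠ t in cofinite, p.eval t ≠ 0 := by
  rw [eventually_cofinite]
  exact p.roots.toFinset.finite_toSet.subset fun t ht ↦ by simpa [hp] using ht

/-- Evaluation of rational functions as functions defined up to finitely many points; unlike
pointwise evaluation, which takes junk values at poles, it is a ring homomorphism. -/
noncomputable def evalGerm : RatFunc ℂ →+* (cofinite : Filter ℂ).Germ ℂ where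
  toFun f := (evR f : (cofinite : Filter ℂ).Germ ℂ)
  map_zero' := Germ.coe_eq.2 (.of_forall fun t ↦ by simp [evR])
  map_one' := Germ.coe_eq.2 (.of_forall fun t ↦ by simp [evR])
  map_add' f g := Germ.coe_eq.2 <| by
    filter_upwards [eventually_eval_ne_zero f.denom_ne_zero,
      eventually_eval_ne_zero g.denom_ne_zero] with t hf hg
    exact RatFunc.eval_add (RingHom.id ℂ) t hf hg
  map_mul' f g := Germ.coe_eq.2 <| by
    filter_upwards [eventually_eval_ne_zero f.denom_ne_zero,
      eventually_eval_ne_zero g.denom_ne_zero] with t hf hg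
    exact RatFunc.eval_mul (RingHom.id ℂ) t hf hg

lemma evalGerm_apply (f : RatFunc ℂ) : evalGerm f = (evR f : (cofinite : Filter ℂ).Germ ℂ) := rfl

lemma evalGerm_algebraMap (p : ℂ[X]) :
    evalGerm (algebraMap ℂ[X] (RatFunc ℂ) p) =
      ((fun t ↦ p.eval t : ℂ → ℂ) : (cofinite : Filter ℂ).Germ ℂ) :=
  Germ.coe_eq.2 (.of_forall fun t ↦ by simp [evR])

lemma evalGerm_X :
    evalGerm RatFunc.X = ((fun t ↦ t : ℂ → ℂ) : (cofinite : Filter ℂ).Germ ℂ) :=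
  Germ.coe_eq.2 (.of_forall fun t ↦ by simp [evR])

lemma evalGerm_C (c : ℂ) :
    evalGerm (RatFunc.C c) = ((fun _ ↦ c : ℂ → ℂ) : (cofinite : Filter ℂ).Germ ℂ) :=
  Germ.coe_eq.2 (.of_forall fun t ↦ by simp [evR])

lemma evalGerm_eulerDeriv (f : RatFunc ℂ) :
    evalGerm (eulerDeriv f) =
      ((fun t ↦ t * deriv (evR f) t : ℂ → ℂ) : (cofinite : Filter ℂ).Germ ℂ) := by
  have hquot : eulerDeriv f * algebraMap ℂ[X] (RatFunc ℂ) (f.denom ^ 2) =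
      RatFunc.X * algebraMap ℂ[X] (RatFunc ℂ) (wronskian f.denom f.num) := by
    rw [eulerDeriv_apply, map_pow, mul_assoc,
      div_mul_cancel₀ _ (pow_ne_zero 2 (RatFunc.algebraMap_ne_zero f.denom_ne_zero))]
  have hgerm := congrArg evalGerm hquot
  rw [map_mul, map_mul, evalGerm_algebraMap, evalGerm_algebraMap, evalGerm_X, evalGerm_apply,
    ← Germ.coe_mul, ← Germ.coe_mul, Germ.coe_eq] at hgerm
  refine Germ.coe_eq.2 ?_
  filter_upwards [hgerm, eventually_eval_ne_zero f.denom_ne_zero] with t ht hd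
  have hderiv : HasDerivAt (evR f) _ t := (f.num.hasDerivAt t).div (f.denom.hasDerivAt t) hd
  rw [hderiv.deriv, mul_div_assoc', eq_div_iff (pow_ne_zero 2 hd)]
  simp only [Pi.mul_apply, eval_pow, wronskian, eval_sub, eval_mul] at ht
  linear_combination ht

lemma IsSasanoSol.isAbstractSasanoSol [DecidableEq (RatFunc ℂ)] {a0 a1 a3 : ℂ}
    {q₁ p₁ q₂ p₂ : RatFunc ℂ} (h : IsSasanoSol a0 a1 a3 q₁ p₁ q₂ p₂) :
    IsAbstractSasanoSol eulerDeriv RatFunc.X (constAtInfty (a0 + a1 + a3)) (constAtInfty a0)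
      (constAtInfty a1) q₁ p₁ q₂ p₂
      (2 * (q₁ * p₁) + 2 * (q₂ * p₂) + RatFunc.C (a0 + a1 + a3)) := by
  have hgood : ∀ᶠ t in cofinite, NoPoleAt q₁ t ∧ NoPoleAt p₁ t ∧ NoPoleAt q₂ t ∧ NoPoleAt p₂ t :=
    (eventually_eval_ne_zero q₁.denom_ne_zero).and <|
      (eventually_eval_ne_zero p₁.denom_ne_zero).and <|
      (eventually_eval_ne_zero q₂.denom_ne_zero).and
      (eventually_eval_ne_zero p₂.denom_ne_zero)
  refine ⟨rfl, evalGerm.injective ?_, evalGerm.injective ?_, evalGerm.injective ?_,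
    evalGerm.injective ?_⟩
  all_goals
    simp only [constAtInfty, map_add, map_sub, map_mul, map_ofNat, evalGerm_eulerDeriv, evalGerm_C,
      evalGerm_X]
    simp only [evalGerm_apply]
    refine Germ.coe_eq.2 (hgood.mono fun t ⟨hq₁, hp₁, hq₂, hp₂⟩ ↦ ?_)
    obtain ⟨e₁, e₂, e₃, e₄⟩ := h t hq₁ hp₁ hq₂ hp₂
    simp only [Pi.natCast_apply, Nat.cast_ofNat]
  · linear_combination e₁
  · linear_combination e₂
  · linear_combination e₃
  · linear_combination e₄

end Evaluation

theorem sasano_rational_solution_unique (a0 a1 a2 a3 : ℂ)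
    (hpar : a0 + a1 + 2 * a2 + a3 = 1 / 2)
    (q1 p1 q2 p2 q1' p1' q2' p2' : RatFunc ℂ)
    (hsol : IsSasanoSol a0 a1 a3 q1 p1 q2 p2)
    (hsol' : IsSasanoSol a0 a1 a3 q1' p1' q2' p2') :
    q1 = q1' ∧ p1 = p1' ∧ q2 = q2' ∧ p2 = p2' := by
  classical
  exact sasano_rational_solution_unique_general (isDegreeAtInfty_inftyValuation two_ne_zero)
    hsol.isAbstractSasanoSol hsol'.isAbstractSasanoSol
end

section
/- Let U ⊆ ℂ \ {0} be a nonempty connected open set and let (q1,p1,q2,p2) be a local solution of A5^(2)(α0,α1,α2,α3) on U with q1 identically 0 on U. Then one of the following holds: (1) α0 = 1/4, α3 = 1/2, and on U one has p1(t) = 1/4 + (4α1−1)(4α1+1)/(16t), q2(t) = −2α1 + 1/2, p2(t) = 1/4; (2) α0 = α3/2, α1 = α3/2, and on U one has p1(t) = 1/4, q2(t) = 0, p2(t) = 1/4; (3) α0 = α3/2, α1 = −α3/2, and on U one has p1(t) = 1/4, q2(t) = 2α3, p2(t) = 1/4. -/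
open Filter Topology

/-- `(q1, p1, q2, p2)` is a local (holomorphic) solution of the Sasano system
`A5^(2)(α0, α1, α2, α3)` on a set `U ⊆ ℂ` (the parameter `α2` does not occur in
the equations): the functions are holomorphic on `U` and the four differential
equations hold at every `t ∈ U`. -/
def IsLocalSasanoSol (a0 a1 a3 : ℂ) (U : Set ℂ) (q1 p1 q2 p2 : ℂ → ℂ) : Prop :=
  DifferentiableOn ℂ q1 U ∧ DifferentiableOn ℂ p1 U ∧
  DifferentiableOn ℂ q2 U ∧ DifferentiableOn ℂ p2 U ∧
  ∀ t ∈ U,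
    (t * deriv q1 t =
      2 * q1 t ^ 2 * p1 t - q1 t ^ 2 + (a0 + a1 + a3) * q1 t
        - t + 4 * t * p2 t + 2 * q1 t * q2 t * p2 t) ∧
    (t * deriv p1 t =
      -2 * q1 t * p1 t ^ 2 + 2 * q1 t * p1 t
        - (a0 + a1 + a3) * p1 t + a0 - 2 * p1 t * q2 t * p2 t) ∧
    (t * deriv q2 t =
      2 * q2 t ^ 2 * p2 t - q2 t ^ 2 + (a0 + a1 + a3) * q2 t
        - t + 4 * t * p1 t + 2 * q1 t * p1 t * q2 t) ∧
    (t * deriv p2 t =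
      -2 * q2 t * p2 t ^ 2 + 2 * q2 t * p2 t
        - (a0 + a1 + a3) * p2 t + a1 - 2 * q1 t * p1 t * p2 t)

/-!
When `q1 = 0`, no integration is needed: the equation for `q1` forces `p2` to be constant, then the
equation for `p2` forces `q2` to be constant, and the equation for `q2` yields `p1`. Explicitly,
with `s = (α0 + α3) / 3`, one finds `p2 = 1 / 4`, `q2 = 2 (s - α1)` and
`p1 = 1 / 4 + (α1 ^ 2 - s ^ 2) / t`. The equation for `p1` is now a compatibility condition, affine
in `t` after clearing denominators; its two coefficients vanish exactly when `α0 = s` and either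
`α1 ^ 2 = s ^ 2` or `4 s = 1`.
-/

section NormedField

variable {𝕜 : Type*} [NontriviallyNormedField 𝕜] {U : Set 𝕜}

theorem deriv_eq_zero_of_eqOn_const {f : 𝕜 → 𝕜} {c t : 𝕜} (hU : IsOpen U)
    (hf : U.EqOn f fun _ => c) (ht : t ∈ U) : deriv f t = 0 :=
  (hf.deriv hU ht).trans (deriv_const t c)

theorem coeffs_eq_zero_of_affine_eq_zero_on_open {a b : 𝕜} (hU : IsOpen U) (hne : U.Nonempty)
    (h : ∀ t ∈ U, a * t + b = 0) : a = 0 ∧ b = 0 := by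
  obtain ⟨t, ht⟩ := hne
  have hderiv : HasDerivAt (fun x => a * x + b) a t := by
    simpa using ((hasDerivAt_id t).const_mul a).add_const b
  have ha : a = 0 := hderiv.deriv.symm.trans (deriv_eq_zero_of_eqOn_const hU h ht)
  exact ⟨ha, by simpa [ha] using h t ht⟩

theorem hasDerivAt_const_add_div (a k : 𝕜) {t : 𝕜} (ht : t ≠ 0) :
    HasDerivAt (fun x => a + k / x) (-k / t ^ 2) t := by
  simpa [div_eq_mul_inv] using ((hasDerivAt_inv ht).const_mul k).const_add a

theorem coeffs_of_const_add_div_solves_euler_equation {y : 𝕜 → 𝕜} {a b k m : 𝕜}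
    (hU : IsOpen U) (hne : U.Nonempty) (hU0 : U ⊆ {0}ᶜ)
    (hy : U.EqOn y fun t => a + k / t) (hode : ∀ t ∈ U, t * deriv y t = b - m * y t) :
    b = m * a ∧ (k = 0 ∨ m = 1) := by
  have haffine : ∀ t ∈ U, (b - m * a) * t + k * (1 - m) = 0 := by
    intro t ht
    have ht0 : t ≠ 0 := hU0 ht
    have hderiv : deriv y t = -k / t ^ 2 :=
      (hy.deriv hU ht).trans (hasDerivAt_const_add_div a k ht0).deriv
    have heq := hode t ht
    rw [hderiv, hy ht] at heq
    field_simp at heq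
    linear_combination -heq
  obtain ⟨hconst, hpole⟩ := coeffs_eq_zero_of_affine_eq_zero_on_open hU hne haffine
  refine ⟨sub_eq_zero.mp hconst, (mul_eq_zero.mp hpole).imp_right fun hm => ?_⟩
  exact (sub_eq_zero.mp hm).symm

end NormedField

namespace IsLocalSasanoSol

variable {a0 a1 a3 : ℂ} {U : Set ℂ} {q1 p1 q2 p2 : ℂ → ℂ}

theorem p2_eqOn_of_q1_eq_zero (hsol : IsLocalSasanoSol a0 a1 a3 U q1 p1 q2 p2)
    (hU : IsOpen U) (hU0 : U ⊆ {0}ᶜ) (hq1 : ∀ t ∈ U, q1 t = 0) :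
    U.EqOn p2 fun _ => 1 / 4 := by
  intro t ht
  obtain ⟨-, -, -, -, hode⟩ := hsol
  have hq1_eq := (hode t ht).1
  rw [deriv_eq_zero_of_eqOn_const hU hq1 ht, hq1 t ht] at hq1_eq
  apply mul_left_cancel₀ (hU0 ht)
  linear_combination -hq1_eq / 4

theorem q2_eqOn_of_q1_eq_zero (hsol : IsLocalSasanoSol a0 a1 a3 U q1 p1 q2 p2)
    (hU : IsOpen U) (hU0 : U ⊆ {0}ᶜ) (hq1 : ∀ t ∈ U, q1 t = 0) :
    U.EqOn q2 fun _ => 2 * ((a0 + a3) / 3 - a1) := by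
  intro t ht
  have hp2 := hsol.p2_eqOn_of_q1_eq_zero hU hU0 hq1
  obtain ⟨-, -, -, -, hode⟩ := hsol
  have hp2_eq := (hode t ht).2.2.2
  rw [deriv_eq_zero_of_eqOn_const hU hp2 ht, hq1 t ht, hp2 ht] at hp2_eq
  linear_combination -8 / 3 * hp2_eq

theorem p1_eqOn_of_q1_eq_zero (hsol : IsLocalSasanoSol a0 a1 a3 U q1 p1 q2 p2)
    (hU : IsOpen U) (hU0 : U ⊆ {0}ᶜ) (hq1 : ∀ t ∈ U, q1 t = 0) :
    U.EqOn p1 fun t => 1 / 4 + (a1 ^ 2 - ((a0 + a3) / 3) ^ 2) / t := by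
  intro t ht
  have ht0 : t ≠ 0 := hU0 ht
  have hp2 := hsol.p2_eqOn_of_q1_eq_zero hU hU0 hq1
  have hq2 := hsol.q2_eqOn_of_q1_eq_zero hU hU0 hq1
  obtain ⟨-, -, -, -, hode⟩ := hsol
  have hq2_eq := (hode t ht).2.2.1
  rw [deriv_eq_zero_of_eqOn_const hU hq2 ht, hq1 t ht, hp2 ht, hq2 ht] at hq2_eq
  field_simp
  linear_combination -9 * hq2_eq

theorem parameters_of_q1_eq_zero (hsol : IsLocalSasanoSol a0 a1 a3 U q1 p1 q2 p2)
    (hU : IsOpen U) (hne : U.Nonempty) (hU0 : U ⊆ {0}ᶜ) (hq1 : ∀ t ∈ U, q1 t = 0) :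
    a3 = 2 * a0 ∧ (a0 = 1 / 4 ∨ a1 = a0 ∨ a1 = -a0) := by
  have hp2 := hsol.p2_eqOn_of_q1_eq_zero hU hU0 hq1
  have hq2 := hsol.q2_eqOn_of_q1_eq_zero hU hU0 hq1
  have hp1 := hsol.p1_eqOn_of_q1_eq_zero hU hU0 hq1
  obtain ⟨-, -, -, -, hode⟩ := hsol
  have heuler : ∀ t ∈ U, t * deriv p1 t = a0 - 4 * ((a0 + a3) / 3) * p1 t := by
    intro t ht
    have hp1_eq := (hode t ht).2.1
    rw [hq1 t ht, hp2 ht, hq2 ht] at hp1_eq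
    linear_combination hp1_eq
  obtain ⟨hconst, hpole⟩ := coeffs_of_const_add_div_solves_euler_equation hU hne hU0 hp1 heuler
  have ha0 : (a0 + a3) / 3 = a0 := by linear_combination -hconst
  rw [ha0] at hpole
  refine ⟨by linear_combination 3 * ha0, ?_⟩
  rcases hpole with hresidue | hexponent
  · exact Or.inr (sq_eq_sq_iff_eq_or_eq_neg.mp (sub_eq_zero.mp hresidue))
  · exact Or.inl (by linear_combination hexponent / 4)

end IsLocalSasanoSol

theorem sasano_local_solution_q1_eq_zero_general (a0 a1 a3 : ℂ)
    (U : Set ℂ) (hUopen : IsOpen U) (hUne : U.Nonempty) (hU0 : U ⊆ {(0 : ℂ)}ᶜ)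
    (q1 p1 q2 p2 : ℂ → ℂ)
    (hsol : IsLocalSasanoSol a0 a1 a3 U q1 p1 q2 p2)
    (hq1 : ∀ t ∈ U, q1 t = 0) :
    (a0 = 1 / 4 ∧ a3 = 1 / 2 ∧ ∀ t ∈ U,
      p1 t = 1 / 4 + (4 * a1 - 1) * (4 * a1 + 1) / (16 * t) ∧
      q2 t = -2 * a1 + 1 / 2 ∧ p2 t = 1 / 4) ∨
    (a0 = a3 / 2 ∧ a1 = a3 / 2 ∧ ∀ t ∈ U,
      p1 t = 1 / 4 ∧ q2 t = 0 ∧ p2 t = 1 / 4) ∨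
    (a0 = a3 / 2 ∧ a1 = -a3 / 2 ∧ ∀ t ∈ U,
      p1 t = 1 / 4 ∧ q2 t = 2 * a3 ∧ p2 t = 1 / 4) := by
  have hp2 := hsol.p2_eqOn_of_q1_eq_zero hUopen hU0 hq1
  have hq2 := hsol.q2_eqOn_of_q1_eq_zero hUopen hU0 hq1
  have hp1 := hsol.p1_eqOn_of_q1_eq_zero hUopen hU0 hq1
  obtain ⟨rfl, rfl | rfl | rfl⟩ := hsol.parameters_of_q1_eq_zero hUopen hUne hU0 hq1
  · refine .inl ⟨rfl, by norm_num, fun t ht => ⟨?_, ?_, hp2 ht⟩⟩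
    · rw [hp1 ht]
      ring
    · rw [hq2 ht]
      ring
  · refine .inr (.inl ⟨by ring, by ring, fun t ht => ⟨?_, ?_, hp2 ht⟩⟩)
    · rw [hp1 ht]
      ring
    · rw [hq2 ht]
      ring
  · refine .inr (.inr ⟨by ring, by ring, fun t ht => ⟨?_, ?_, hp2 ht⟩⟩)
    · rw [hp1 ht]
      ring
    · rw [hq2 ht]
      ring

theorem sasano_local_solution_q1_eq_zero (a0 a1 a2 a3 : ℂ)
    (hpar : a0 + a1 + 2 * a2 + a3 = 1 / 2)
    (U : Set ℂ) (hUopen : IsOpen U) (hUconn : IsConnected U) (hU0 : U ⊆ {(0 : ℂ)}ᶜ)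
    (q1 p1 q2 p2 : ℂ → ℂ)
    (hsol : IsLocalSasanoSol a0 a1 a3 U q1 p1 q2 p2)
    (hq1 : ∀ t ∈ U, q1 t = 0) :
    (a0 = 1 / 4 ∧ a3 = 1 / 2 ∧ ∀ t ∈ U,
      p1 t = 1 / 4 + (4 * a1 - 1) * (4 * a1 + 1) / (16 * t) ∧
      q2 t = -2 * a1 + 1 / 2 ∧ p2 t = 1 / 4) ∨
    (a0 = a3 / 2 ∧ a1 = a3 / 2 ∧ ∀ t ∈ U,
      p1 t = 1 / 4 ∧ q2 t = 0 ∧ p2 t = 1 / 4) ∨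
    (a0 = a3 / 2 ∧ a1 = -a3 / 2 ∧ ∀ t ∈ U,
      p1 t = 1 / 4 ∧ q2 t = 2 * a3 ∧ p2 t = 1 / 4) :=
  sasano_local_solution_q1_eq_zero_general a0 a1 a3 U hUopen hUconn.nonempty hU0
    q1 p1 q2 p2 hsol hq1
end

section
/- Let U ⊆ ℂ \ {0} be a nonempty connected open set and let (q1,p1,q2,p2) be a local solution of A5^(2)(α0,α1,α2,α3) on U with q2 identically 0 on U. Then one of the following holds: (1) α1 = 1/4, α3 = 1/2, and on U one has q1(t) = −2α0 + 1/2, p1(t) = 1/4, p2(t) = 1/4 + (4α0−1)(4α0+1)/(16t); (2) α0 = α3/2, α1 = α3/2, and on U one has q1(t) = 0, p1(t) = 1/4, p2(t) = 1/4; (3) α0 = −α3/2, α1 = α3/2, and on U one has q1(t) = 2α3, p1(t) = 1/4, p2(t) = 1/4. -/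
open Filter Topology

/-!
With `q2 = 0` the third equation becomes algebraic and forces `p1 = 1/4`. Constancy of `p1` turns
the second equation into one determining the constant `q1`, and constancy of `q1` turns the first
into one determining `p2 = 1/4 + κ / t`. Substituted into the fourth equation, this leaves a
polynomial of degree at most one in `t` which vanishes on `U`. Its two coefficients give
`a3 = 2 * a1` and `(4 * a1 - 1) * (a0 - a1) * (a0 + a1) = 0`, whose three factors are the three
cases.
-/

theorem eq_zero_and_eq_zero_of_forall_mul_add_eq_zero {R : Type*} [Ring R] [NoZeroDivisors R]
    {s : Set R} (hs : s.Nontrivial) {a b : R} (h : ∀ x ∈ s, a * x + b = 0) : a = 0 ∧ b = 0 := by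
  obtain ⟨x, hx, y, hy, hxy⟩ := hs
  have ha : a = 0 := by
    have hmul : a * (x - y) = 0 := by
      rw [mul_sub, sub_eq_zero]
      exact add_right_cancel ((h x hx).trans (h y hy).symm)
    exact (mul_eq_zero.1 hmul).resolve_right (sub_ne_zero.2 hxy)
  exact ⟨ha, by simpa [ha] using h x hx⟩

theorem deriv_eq_zero_of_eqOn_const_s7 {𝕜 F : Type*} [NontriviallyNormedField 𝕜]
    [NormedAddCommGroup F] [NormedSpace 𝕜 F] {f : 𝕜 → F} {c : F} {s : Set 𝕜}
    (hs : IsOpen s) (hf : Set.EqOn f (fun _ ↦ c) s) {t : 𝕜} (ht : t ∈ s) : deriv f t = 0 :=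
  (hf.deriv hs ht).trans (deriv_const t c)

namespace IsLocalSasanoSol

variable {a0 a1 a3 : ℂ} {U : Set ℂ} {q1 p1 q2 p2 : ℂ → ℂ}

theorem eqOn_p1_of_eqOn_q2_zero (hsol : IsLocalSasanoSol a0 a1 a3 U q1 p1 q2 p2)
    (hU : IsOpen U) (hU0 : U ⊆ {(0 : ℂ)}ᶜ) (hq2 : Set.EqOn q2 (fun _ ↦ 0) U) :
    Set.EqOn p1 (fun _ ↦ 1 / 4) U := by
  intro t ht
  obtain ⟨-, -, -, -, heq⟩ := hsol
  obtain ⟨-, -, hq2', -⟩ := heq t ht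
  rw [deriv_eq_zero_of_eqOn_const_s7 hU hq2 ht, hq2 ht] at hq2'
  apply mul_left_cancel₀ (hU0 ht)
  linear_combination -hq2' / 4

theorem eqOn_q1_of_eqOn_q2_zero (hsol : IsLocalSasanoSol a0 a1 a3 U q1 p1 q2 p2)
    (hU : IsOpen U) (hU0 : U ⊆ {(0 : ℂ)}ᶜ) (hq2 : Set.EqOn q2 (fun _ ↦ 0) U) :
    Set.EqOn q1 (fun _ ↦ 2 * ((a1 + a3) / 3 - a0)) U := by
  intro t ht
  have hp1 := hsol.eqOn_p1_of_eqOn_q2_zero hU hU0 hq2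
  obtain ⟨-, -, -, -, heq⟩ := hsol
  obtain ⟨-, hp1', -, -⟩ := heq t ht
  rw [deriv_eq_zero_of_eqOn_const_s7 hU hp1 ht, hq2 ht, hp1 ht] at hp1'
  linear_combination -8 / 3 * hp1'

theorem eqOn_p2_of_eqOn_q2_zero (hsol : IsLocalSasanoSol a0 a1 a3 U q1 p1 q2 p2)
    (hU : IsOpen U) (hU0 : U ⊆ {(0 : ℂ)}ᶜ) (hq2 : Set.EqOn q2 (fun _ ↦ 0) U) :
    Set.EqOn p2 (fun t ↦ 1 / 4 + (a0 ^ 2 - ((a1 + a3) / 3) ^ 2) / t) U := by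
  intro t ht
  have hp1 := hsol.eqOn_p1_of_eqOn_q2_zero hU hU0 hq2
  have hq1 := hsol.eqOn_q1_of_eqOn_q2_zero hU hU0 hq2
  have ht0 : t ≠ 0 := hU0 ht
  obtain ⟨-, -, -, -, heq⟩ := hsol
  obtain ⟨hq1', -, -, -⟩ := heq t ht
  rw [deriv_eq_zero_of_eqOn_const_s7 hU hq1 ht, hq2 ht, hp1 ht, hq1 ht] at hq1'
  field_simp
  linear_combination -9 * hq1'

theorem mul_add_eq_zero_of_eqOn_q2_zero (hsol : IsLocalSasanoSol a0 a1 a3 U q1 p1 q2 p2)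
    (hU : IsOpen U) (hU0 : U ⊆ {(0 : ℂ)}ᶜ) (hq2 : Set.EqOn q2 (fun _ ↦ 0) U) {t : ℂ} (ht : t ∈ U) :
    (a1 - (a1 + a3) / 3) * t
      + (1 - 4 * ((a1 + a3) / 3)) * (a0 ^ 2 - ((a1 + a3) / 3) ^ 2) = 0 := by
  have hp1 := hsol.eqOn_p1_of_eqOn_q2_zero hU hU0 hq2
  have hq1 := hsol.eqOn_q1_of_eqOn_q2_zero hU hU0 hq2
  have hp2 := hsol.eqOn_p2_of_eqOn_q2_zero hU hU0 hq2
  have ht0 : t ≠ 0 := hU0 ht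
  have hp2_mul : t * p2 t = t / 4 + (a0 ^ 2 - ((a1 + a3) / 3) ^ 2) := by
    rw [hp2 ht]
    field_simp
  have hderiv_mul : t ^ 2 * deriv p2 t = -(a0 ^ 2 - ((a1 + a3) / 3) ^ 2) := by
    rw [hp2.deriv hU ht, deriv_const_add (1 / 4 : ℂ), deriv_const_div_id]
    field_simp
  obtain ⟨-, -, -, -, heq⟩ := hsol
  obtain ⟨-, -, -, hp2'⟩ := heq t ht
  rw [hq2 ht, hp1 ht, hq1 ht] at hp2'
  linear_combination -t * hp2' + hderiv_mul + 4 * ((a1 + a3) / 3) * hp2_mul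

theorem parameter_relations_of_eqOn_q2_zero (hsol : IsLocalSasanoSol a0 a1 a3 U q1 p1 q2 p2)
    (hU : IsOpen U) (hne : U.Nonempty) (hU0 : U ⊆ {(0 : ℂ)}ᶜ) (hq2 : Set.EqOn q2 (fun _ ↦ 0) U) :
    a3 = 2 * a1 ∧ (4 * a1 - 1) * (a0 - a1) * (a0 + a1) = 0 := by
  obtain ⟨t, ht⟩ := hne
  have hnontrivial : U.Nontrivial := (infinite_of_mem_nhds t (hU.mem_nhds ht)).nontrivial
  obtain ⟨hslope, hconst⟩ := eq_zero_and_eq_zero_of_forall_mul_add_eq_zero hnontrivial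
    fun _ ↦ hsol.mul_add_eq_zero_of_eqOn_q2_zero hU hU0 hq2
  have ha3 : a3 = 2 * a1 := by linear_combination -3 * hslope
  refine ⟨ha3, ?_⟩
  rw [ha3] at hconst
  linear_combination -hconst

end IsLocalSasanoSol

theorem sasano_local_solution_q2_eq_zero_general {a0 a1 a3 : ℂ} {U : Set ℂ}
    (hUopen : IsOpen U) (hUne : U.Nonempty) (hU0 : U ⊆ {(0 : ℂ)}ᶜ)
    {q1 p1 q2 p2 : ℂ → ℂ} (hsol : IsLocalSasanoSol a0 a1 a3 U q1 p1 q2 p2)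
    (hq2 : ∀ t ∈ U, q2 t = 0) :
    (a1 = 1 / 4 ∧ a3 = 1 / 2 ∧ ∀ t ∈ U,
      q1 t = -2 * a0 + 1 / 2 ∧ p1 t = 1 / 4 ∧
      p2 t = 1 / 4 + (4 * a0 - 1) * (4 * a0 + 1) / (16 * t)) ∨
    (a0 = a3 / 2 ∧ a1 = a3 / 2 ∧ ∀ t ∈ U,
      q1 t = 0 ∧ p1 t = 1 / 4 ∧ p2 t = 1 / 4) ∨
    (a0 = -a3 / 2 ∧ a1 = a3 / 2 ∧ ∀ t ∈ U,
      q1 t = 2 * a3 ∧ p1 t = 1 / 4 ∧ p2 t = 1 / 4) := by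
  have hp1 := hsol.eqOn_p1_of_eqOn_q2_zero hUopen hU0 hq2
  have hq1 := hsol.eqOn_q1_of_eqOn_q2_zero hUopen hU0 hq2
  have hp2 := hsol.eqOn_p2_of_eqOn_q2_zero hUopen hU0 hq2
  obtain ⟨rfl, hfactors⟩ := hsol.parameter_relations_of_eqOn_q2_zero hUopen hUne hU0 hq2
  rcases mul_eq_zero.1 hfactors with hprod | hsum
  · rcases mul_eq_zero.1 hprod with hquarter | hdiff
    · obtain rfl : a1 = 1 / 4 := by linear_combination hquarter / 4
      refine .inl ⟨rfl, by norm_num, fun t ht ↦ ⟨?_, hp1 ht, ?_⟩⟩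
      · rw [hq1 ht]; ring
      · rw [hp2 ht]; ring
    · obtain rfl : a0 = a1 := sub_eq_zero.1 hdiff
      refine .inr (.inl ⟨by ring, by ring, fun t ht ↦ ⟨?_, hp1 ht, ?_⟩⟩)
      · rw [hq1 ht]; ring
      · rw [hp2 ht]; ring
  · obtain rfl : a0 = -a1 := eq_neg_of_add_eq_zero_left hsum
    refine .inr (.inr ⟨by ring, by ring, fun t ht ↦ ⟨?_, hp1 ht, ?_⟩⟩)
    · rw [hq1 ht]; ring
    · rw [hp2 ht]; ring

theorem sasano_local_solution_q2_eq_zero (a0 a1 a2 a3 : ℂ)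
    (hpar : a0 + a1 + 2 * a2 + a3 = 1 / 2)
    (U : Set ℂ) (hUopen : IsOpen U) (hUconn : IsConnected U) (hU0 : U ⊆ {(0 : ℂ)}ᶜ)
    (q1 p1 q2 p2 : ℂ → ℂ)
    (hsol : IsLocalSasanoSol a0 a1 a3 U q1 p1 q2 p2)
    (hq2 : ∀ t ∈ U, q2 t = 0) :
    (a1 = 1 / 4 ∧ a3 = 1 / 2 ∧ ∀ t ∈ U,
      q1 t = -2 * a0 + 1 / 2 ∧ p1 t = 1 / 4 ∧
      p2 t = 1 / 4 + (4 * a0 - 1) * (4 * a0 + 1) / (16 * t)) ∨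
    (a0 = a3 / 2 ∧ a1 = a3 / 2 ∧ ∀ t ∈ U,
      q1 t = 0 ∧ p1 t = 1 / 4 ∧ p2 t = 1 / 4) ∨
    (a0 = -a3 / 2 ∧ a1 = a3 / 2 ∧ ∀ t ∈ U,
      q1 t = 2 * a3 ∧ p1 t = 1 / 4 ∧ p2 t = 1 / 4) := by
  exact sasano_local_solution_q2_eq_zero_general hUopen hUconn.nonempty hU0 hsol hq2
end

section
/- Let (q1,p1,q2,p2) be a rational solution of A5^(2)(α0,α1,α2,α3) such that none of q1, p1, q2, p2 has a pole at 0. Then one of the following four cases holds: (1) q1(0) = 0, −(α0+α1+α3)·p1(0) + α0 = 0, q2(0) = 0, −(α0+α1+α3)·p2(0) + α1 = 0; (2) q1(0) = 0, (−α0+α1−α3)·p1(0) + α0 = 0, q2(0) = α0−α1+α3, (−α0+α1−α3)·p2(0) − α1 = 0; (3) q1(0) = −α0+α1+α3, (α0−α1−α3)·p1(0) − α0 = 0, q2(0) = 0, (α0−α1−α3)·p2(0) + α1 = 0; (4) q1(0) = −α0−α1+α3, (α0+α1−α3)·p1(0) − α0 = 0, q2(0) = −α0−α1+α3, (α0+α1−α3)·p2(0)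 − α1 = 0. -/
open Filter Topology Polynomial

/-!
At `t = 0` the left-hand sides `t * q'` and `t * p'` vanish, so the values of a solution satisfy
four polynomial equations. The first is divisible by `q1`; if `q1 ≠ 0`, the cofactor vanishes, which
reduces the second to `q1 * p1 = -a0`, and then the cofactor gives `q1` in terms of `q2 * p2`.
Exchanging the two pairs is a symmetry (with `a0` and `a1` swapped), and the four cases record which
of `q1`, `q2` vanish.
-/

/-- The algebraic equations on the values `(q1, p1, q2, p2)` at `t = 0` of a solution of the Sasano
system without a pole there. As the terms containing a derivative drop out, the notion makes sense
over any commutative ring. -/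
structure IsSasanoInitialValue {R : Type*} [CommRing R] (a0 a1 a3 q1 p1 q2 p2 : R) : Prop where
  eq_q1 : 2 * q1 ^ 2 * p1 - q1 ^ 2 + (a0 + a1 + a3) * q1 + 2 * q1 * q2 * p2 = 0
  eq_p1 : -2 * q1 * p1 ^ 2 + 2 * q1 * p1 - (a0 + a1 + a3) * p1 + a0 - 2 * p1 * q2 * p2 = 0
  eq_q2 : 2 * q2 ^ 2 * p2 - q2 ^ 2 + (a0 + a1 + a3) * q2 + 2 * q1 * p1 * q2 = 0
  eq_p2 : -2 * q2 * p2 ^ 2 + 2 * q2 * p2 - (a0 + a1 + a3) * p2 + a1 - 2 * q1 * p1 * p2 = 0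

theorem IsSasanoSol.isSasanoInitialValue {a0 a1 a3 : ℂ} {q1 p1 q2 p2 : RatFunc ℂ}
    (hsol : IsSasanoSol a0 a1 a3 q1 p1 q2 p2) (hq1 : NoPoleAt q1 0) (hp1 : NoPoleAt p1 0)
    (hq2 : NoPoleAt q2 0) (hp2 : NoPoleAt p2 0) :
    IsSasanoInitialValue a0 a1 a3 (evR q1 0) (evR p1 0) (evR q2 0) (evR p2 0) := by
  obtain ⟨eq_q1, eq_p1, eq_q2, eq_p2⟩ := hsol 0 hq1 hp1 hq2 hp2
  constructor
  · linear_combination -eq_q1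
  · linear_combination -eq_p1
  · linear_combination -eq_q2
  · linear_combination -eq_p2

namespace IsSasanoInitialValue

variable {R : Type*} [CommRing R] {a0 a1 a3 q1 p1 q2 p2 : R}

theorem swap (h : IsSasanoInitialValue a0 a1 a3 q1 p1 q2 p2) :
    IsSasanoInitialValue a1 a0 a3 q2 p2 q1 p1 where
  eq_q1 := by linear_combination h.eq_q2
  eq_p1 := by linear_combination h.eq_p2
  eq_q2 := by linear_combination h.eq_q1
  eq_p2 := by linear_combination h.eq_p1

variable [NoZeroDivisors R]

theorem cofactor_eq_zero (h : IsSasanoInitialValue a0 a1 a3 q1 p1 q2 p2) (hq1 : q1 ≠ 0) :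
    2 * (q1 * p1) - q1 + (a0 + a1 + a3) + 2 * (q2 * p2) = 0 := by
  have factored : q1 * (2 * (q1 * p1) - q1 + (a0 + a1 + a3) + 2 * (q2 * p2)) = 0 := by
    linear_combination h.eq_q1
  exact (mul_eq_zero.mp factored).resolve_left hq1

theorem q1_mul_p1_eq_neg (h : IsSasanoInitialValue a0 a1 a3 q1 p1 q2 p2) (hq1 : q1 ≠ 0) :
    q1 * p1 = -a0 := by
  linear_combination h.eq_p1 + p1 * h.cofactor_eq_zero hq1

theorem q1_eq_add_two_mul (h : IsSasanoInitialValue a0 a1 a3 q1 p1 q2 p2) (hq1 : q1 ≠ 0) :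
    q1 = -a0 + a1 + a3 + 2 * (q2 * p2) := by
  linear_combination 2 * h.q1_mul_p1_eq_neg hq1 - h.cofactor_eq_zero hq1

theorem values_of_q1_ne_zero_of_q2_eq_zero (h : IsSasanoInitialValue a0 a1 a3 q1 p1 q2 p2)
    (hq1 : q1 ≠ 0) (hq2 : q2 = 0) :
    q1 = -a0 + a1 + a3 ∧ (a0 - a1 - a3) * p1 - a0 = 0 ∧ (a0 - a1 - a3) * p2 + a1 = 0 := by
  subst hq2
  have q1_eq : q1 = -a0 + a1 + a3 := by linear_combination h.q1_eq_add_two_mul hq1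
  refine ⟨q1_eq, ?_, ?_⟩
  · linear_combination p1 * q1_eq - h.q1_mul_p1_eq_neg hq1
  · linear_combination h.eq_p2 + 2 * p2 * h.q1_mul_p1_eq_neg hq1

theorem values_of_q1_ne_zero_of_q2_ne_zero (h : IsSasanoInitialValue a0 a1 a3 q1 p1 q2 p2)
    (hq1 : q1 ≠ 0) (hq2 : q2 ≠ 0) :
    q1 = -a0 - a1 + a3 ∧ (a0 + a1 - a3) * p1 - a0 = 0 := by
  have q1_eq : q1 = -a0 - a1 + a3 := by
    linear_combination h.q1_eq_add_two_mul hq1 + 2 * h.swap.q1_mul_p1_eq_neg hq2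
  exact ⟨q1_eq, by linear_combination p1 * q1_eq - h.q1_mul_p1_eq_neg hq1⟩

end IsSasanoInitialValue

theorem sasano_holomorphic_at_zero_values_general {R : Type*} [CommRing R] [NoZeroDivisors R]
    {a0 a1 a3 q1 p1 q2 p2 : R} (h : IsSasanoInitialValue a0 a1 a3 q1 p1 q2 p2) :
    (q1 = 0 ∧ -(a0 + a1 + a3) * p1 + a0 = 0 ∧
      q2 = 0 ∧ -(a0 + a1 + a3) * p2 + a1 = 0) ∨
    (q1 = 0 ∧ (-a0 + a1 - a3) * p1 + a0 = 0 ∧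
      q2 = a0 - a1 + a3 ∧ (-a0 + a1 - a3) * p2 - a1 = 0) ∨
    (q1 = -a0 + a1 + a3 ∧ (a0 - a1 - a3) * p1 - a0 = 0 ∧
      q2 = 0 ∧ (a0 - a1 - a3) * p2 + a1 = 0) ∨
    (q1 = -a0 - a1 + a3 ∧ (a0 + a1 - a3) * p1 - a0 = 0 ∧
      q2 = -a0 - a1 + a3 ∧ (a0 + a1 - a3) * p2 - a1 = 0) := by
  rcases eq_or_ne q1 0 with hq1 | hq1 <;> rcases eq_or_ne q2 0 with hq2 | hq2
  · subst hq1 hq2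
    exact .inl ⟨rfl, by linear_combination h.eq_p1, rfl, by linear_combination h.eq_p2⟩
  · obtain ⟨q2_eq, p2_eq, p1_eq⟩ := h.swap.values_of_q1_ne_zero_of_q2_eq_zero hq2 hq1
    exact .inr <| .inl ⟨hq1, by linear_combination p1_eq, by linear_combination q2_eq,
      by linear_combination p2_eq⟩
  · obtain ⟨q1_eq, p1_eq, p2_eq⟩ := h.values_of_q1_ne_zero_of_q2_eq_zero hq1 hq2
    exact .inr <| .inr <| .inl ⟨q1_eq, p1_eq, hq2, p2_eq⟩
  · obtain ⟨q1_eq, p1_eq⟩ := h.values_of_q1_ne_zero_of_q2_ne_zero hq1 hq2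
    obtain ⟨q2_eq, p2_eq⟩ := h.swap.values_of_q1_ne_zero_of_q2_ne_zero hq2 hq1
    exact .inr <| .inr <| .inr ⟨q1_eq, p1_eq, by linear_combination q2_eq,
      by linear_combination p2_eq⟩

theorem sasano_holomorphic_at_zero_values (a0 a1 a2 a3 : ℂ)
    (hpar : a0 + a1 + 2 * a2 + a3 = 1 / 2)
    (q1 p1 q2 p2 : RatFunc ℂ)
    (hsol : IsSasanoSol a0 a1 a3 q1 p1 q2 p2)
    (hq1 : NoPoleAt q1 0) (hp1 : NoPoleAt p1 0)
    (hq2 : NoPoleAt q2 0) (hp2 : NoPoleAt p2 0) :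
    (evR q1 0 = 0 ∧ -(a0 + a1 + a3) * evR p1 0 + a0 = 0 ∧
      evR q2 0 = 0 ∧ -(a0 + a1 + a3) * evR p2 0 + a1 = 0) ∨
    (evR q1 0 = 0 ∧ (-a0 + a1 - a3) * evR p1 0 + a0 = 0 ∧
      evR q2 0 = a0 - a1 + a3 ∧ (-a0 + a1 - a3) * evR p2 0 - a1 = 0) ∨
    (evR q1 0 = -a0 + a1 + a3 ∧ (a0 - a1 - a3) * evR p1 0 - a0 = 0 ∧
      evR q2 0 = 0 ∧ (a0 - a1 - a3) * evR p2 0 + a1 = 0) ∨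
    (evR q1 0 = -a0 - a1 + a3 ∧ (a0 + a1 - a3) * evR p1 0 - a0 = 0 ∧
      evR q2 0 = -a0 - a1 + a3 ∧ (a0 + a1 - a3) * evR p2 0 - a1 = 0) :=
  sasano_holomorphic_at_zero_values_general (hsol.isSasanoInitialValue hq1 hp1 hq2 hp2)
end

section
/- Let (q1,p1,q2,p2) be a rational solution of A5^(2)(α0,α1,α2,α3) such that p1 has a pole at 0 and none of q1, q2, p2 has a pole at 0. Then (4α1−1)(4α1+1) ≠ 0, p1 has a simple pole at 0 with residue (4α1−1)(4α1+1)/16 (i.e., t·p1(t) → (4α1−1)(4α1+1)/16 as t → 0), q1(0) = 0, the derivative of q1 at 0 equals (−8α0−8α3+6)/((4α1−1)(4α1+1)), q2(0) = −2α1 + 1/2, and p2(0) = 1/4. -/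
/-!
At a pole of `p1` of order `n`, dividing the equation for `p1` by `p1` shows that `q1 * p1` has a
finite limit, since `t * p1' / p1` tends to `-n`; in particular `q1` vanishes at `0`. The equation
for `q2` then bounds `t * p1`, so the pole is simple. What remains is the comparison of constant
terms: in the equations for `q2` and `p2`, and in the equation for `q1` divided by `t`. The
resulting algebraic relations determine the residue, `q1'(0)`, `q2(0)` and `p2(0)`.
-/

open Filter Topology Polynomial

section Meromorphic

variable {𝕜 : Type*} [NontriviallyNormedField 𝕜] {f g : 𝕜 → 𝕜} {c : 𝕜}

lemma tendsto_sub_mul_logDeriv [CompleteSpace 𝕜] (hf : MeromorphicAt f c)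
    (htop : meromorphicOrderAt f c ≠ ⊤) :
    Tendsto (fun z ↦ (z - c) * logDeriv f z) (𝓝[≠] c) (𝓝 (meromorphicOrderAt f c).untop₀) := by
  set n := (meromorphicOrderAt f c).untop₀
  obtain ⟨g, hg, hgc, hfg⟩ := (meromorphicOrderAt_ne_top_iff hf).1 htop
  have hlog : ∀ᶠ z in 𝓝[≠] c, (z - c) * logDeriv f z = n + (z - c) * (deriv g z / g z) := by
    filter_upwards [logDeriv_congr_nhdsNE hfg, self_mem_nhdsWithin,
      hg.eventually_analyticAt.filter_mono nhdsWithin_le_nhds,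
      (hg.continuousAt.eventually_ne hgc).filter_mono nhdsWithin_le_nhds] with z hz hzc hgz hgz₀
    have hzc : z - c ≠ 0 := sub_ne_zero.2 hzc
    have hsub : DifferentiableAt 𝕜 (fun w ↦ w - c) z := by fun_prop
    have hpow : DifferentiableAt 𝕜 (fun w ↦ (w - c) ^ n) z := hsub.zpow (.inl hzc)
    have hpow₀ : (z - c) ^ n ≠ 0 := zpow_ne_zero n hzc
    simp only [hz, smul_eq_mul]
    rw [logDeriv_mul z hpow₀ hgz₀ hpow hgz.differentiableAt, logDeriv_fun_zpow hsub,
      logDeriv_apply, logDeriv_apply, deriv_sub_const, deriv_id'']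
    field_simp
  have hcont : ContinuousAt (fun z ↦ (n : 𝕜) + (z - c) * (deriv g z / g z)) c := by
    have := hg.continuousAt
    have := hg.deriv.continuousAt
    fun_prop (disch := assumption)
  simpa using hcont.continuousWithinAt.tendsto.congr' (hlog.mono fun _ ↦ Eq.symm)

lemma meromorphicOrderAt_sub_mul (hf : MeromorphicAt f c) :
    meromorphicOrderAt (fun z ↦ (z - c) * f z) c = 1 + meromorphicOrderAt f c := by
  have hsub : MeromorphicAt (fun z ↦ z - c) c := by fun_prop
  have horder : meromorphicOrderAt (fun z ↦ z - c) c = 1 :=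
    (meromorphicOrderAt_eq_int_iff (n := 1) hsub).2 ⟨1, analyticAt_const, by simp, by simp⟩
  rw [← horder, ← meromorphicOrderAt_mul hsub hf]
  rfl

lemma meromorphicOrderAt_eq_neg_one_of_tendsto_sub_mul {r : 𝕜}
    (hneg : meromorphicOrderAt f c < 0) (hr : Tendsto (fun z ↦ (z - c) * f z) (𝓝[≠] c) (𝓝 r)) :
    meromorphicOrderAt f c = -1 := by
  have hf : MeromorphicAt f c := meromorphicAt_of_meromorphicOrderAt_ne_zero hneg.ne
  have hnonneg := (tendsto_nhds_iff_meromorphicOrderAt_nonneg (by fun_prop)).1 ⟨r, hr⟩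
  rw [meromorphicOrderAt_sub_mul hf] at hnonneg
  obtain ⟨n, hn⟩ := WithTop.ne_top_iff_exists.1 hneg.ne_top
  rw [← hn] at hneg hnonneg ⊢
  norm_cast at hneg hnonneg
  obtain rfl : n = -1 := by lia
  rfl

lemma ne_zero_of_tendsto_sub_mul {r : 𝕜} (hsimple : meromorphicOrderAt f c = -1)
    (hr : Tendsto (fun z ↦ (z - c) * f z) (𝓝[≠] c) (𝓝 r)) : r ≠ 0 := by
  rintro rfl
  have hf : MeromorphicAt f c :=
    meromorphicAt_of_meromorphicOrderAt_ne_zero (by rw [hsimple]; decide)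
  have hpos := (tendsto_zero_iff_meromorphicOrderAt_pos (by fun_prop)).1 hr
  rw [meromorphicOrderAt_sub_mul hf, hsimple] at hpos
  exact absurd hpos (by decide)

lemma eq_zero_of_tendsto_mul_of_tendsto_cobounded {l : 𝕜} (hf : ContinuousAt f c)
    (hg : Tendsto g (𝓝[≠] c) (Bornology.cobounded 𝕜))
    (hfg : Tendsto (fun z ↦ f z * g z) (𝓝[≠] c) (𝓝 l)) : f c = 0 := by
  have hlim := hfg.mul (tendsto_inv₀_cobounded.comp hg)
  rw [mul_zero] at hlim
  refine tendsto_nhds_unique (hf.continuousWithinAt.tendsto.congr' ?_) hlim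
  filter_upwards [hg.eventually_ne_cobounded 0] with z hz
  simp [hz]

lemma tendsto_inv_sub_mul_of_hasDerivAt {f' : 𝕜} (hf : HasDerivAt f f' c) (hfc : f c = 0) :
    Tendsto (fun z ↦ (z - c)⁻¹ * f z) (𝓝[≠] c) (𝓝 f') := by
  simpa [slope_fun_def, hfc] using hf.tendsto_slope

lemma deriv_mul_residue_eq {f' r l : 𝕜} (hf : HasDerivAt f f' c) (hfc : f c = 0)
    (hg : Tendsto (fun z ↦ (z - c) * g z) (𝓝[≠] c) (𝓝 r))
    (hfg : Tendsto (fun z ↦ f z * g z) (𝓝[≠] c) (𝓝 l)) : f' * r = l := by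
  refine tendsto_nhds_unique (((tendsto_inv_sub_mul_of_hasDerivAt hf hfc).mul hg).congr' ?_) hfg
  filter_upwards [self_mem_nhdsWithin] with z hz
  field_simp [sub_ne_zero.2 hz]

end Meromorphic

section RationalFunction

variable {f : RatFunc ℂ} {c : ℂ}

lemma NoPoleAt.analyticAt_evR (h : NoPoleAt f c) : AnalyticAt ℂ (evR f) c :=
  (AnalyticOnNhd.eval_polynomial f.num c trivial).div
    (AnalyticOnNhd.eval_polynomial f.denom c trivial) h

lemma eventually_noPoleAt_nhdsNE (f : RatFunc ℂ) (c : ℂ) : ∀ᶠ t in 𝓝[≠] c, NoPoleAt f t :=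
  nhdsNE_le_cofinite c (f.denom.finite_setOfPred_isRoot f.denom_ne_zero).compl_mem_cofinite

lemma tendsto_evR_cobounded (h : ¬ NoPoleAt f c) :
    Tendsto (evR f) (𝓝[≠] c) (Bornology.cobounded ℂ) := by
  have hdenom : f.denom.eval c = 0 := not_not.1 h
  have hnum : f.num.eval c ≠ 0 := fun hnum ↦ by
    obtain ⟨a, b, hab⟩ := f.isCoprime_num_denom
    simpa [hnum, hdenom] using congrArg (Polynomial.eval c) hab
  have hcont : ContinuousAt (fun t ↦ f.denom.eval t / f.num.eval t) c :=
    f.denom.continuousAt.div f.num.continuousAt hnum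
  have hinv : Tendsto (fun t ↦ f.denom.eval t / f.num.eval t) (𝓝[≠] c) (𝓝[≠] 0) := by
    refine tendsto_nhdsWithin_iff.2 ⟨by simpa [hdenom] using hcont.continuousWithinAt.tendsto, ?_⟩
    filter_upwards [eventually_noPoleAt_nhdsNE f c,
      (f.num.continuousAt.eventually_ne hnum).filter_mono nhdsWithin_le_nhds] with t ht ht'
    exact div_ne_zero ht ht'
  exact (tendsto_inv₀_nhdsNE_zero.comp hinv).congr fun t ↦ inv_div _ _

lemma meromorphicOrderAt_evR_neg (h : ¬ NoPoleAt f c) : meromorphicOrderAt (evR f) c < 0 :=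
  have hmero : MeromorphicAt (evR f) c :=
    (AnalyticOnNhd.eval_polynomial f.num c trivial).meromorphicAt.div
      (AnalyticOnNhd.eval_polynomial f.denom c trivial).meromorphicAt
  (tendsto_cobounded_iff_meromorphicOrderAt_neg hmero).1 (tendsto_evR_cobounded h)

end RationalFunction

/-- The four equations of the Sasano system `A5^(2)(α0, α1, α2, α3)` at the point `t`, for
arbitrary functions in place of rational ones. -/
structure SasanoEqsAt (a0 a1 a3 : ℂ) (q1 p1 q2 p2 : ℂ → ℂ) (t : ℂ) : Prop where
  q1_eq : t * deriv q1 t =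
    2 * q1 t ^ 2 * p1 t - q1 t ^ 2 + (a0 + a1 + a3) * q1 t - t + 4 * t * p2 t
      + 2 * q1 t * q2 t * p2 t
  p1_eq : t * deriv p1 t =
    -2 * q1 t * p1 t ^ 2 + 2 * q1 t * p1 t - (a0 + a1 + a3) * p1 t + a0 - 2 * p1 t * q2 t * p2 t
  q2_eq : t * deriv q2 t =
    2 * q2 t ^ 2 * p2 t - q2 t ^ 2 + (a0 + a1 + a3) * q2 t - t + 4 * t * p1 t
      + 2 * q1 t * p1 t * q2 t
  p2_eq : t * deriv p2 t =
    -2 * q2 t * p2 t ^ 2 + 2 * q2 t * p2 t - (a0 + a1 + a3) * p2 t + a1 - 2 * q1 t * p1 t * p2 t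

lemma IsSasanoSol.eventually_sasanoEqsAt {a0 a1 a3 : ℂ} {q1 p1 q2 p2 : RatFunc ℂ}
    (hsol : IsSasanoSol a0 a1 a3 q1 p1 q2 p2) (c : ℂ) :
    ∀ᶠ t in 𝓝[≠] c, SasanoEqsAt a0 a1 a3 (evR q1) (evR p1) (evR q2) (evR p2) t := by
  filter_upwards [eventually_noPoleAt_nhdsNE q1 c, eventually_noPoleAt_nhdsNE p1 c,
    eventually_noPoleAt_nhdsNE q2 c, eventually_noPoleAt_nhdsNE p2 c] with t hq1 hp1 hq2 hp2
  obtain ⟨hq1_eq, hp1_eq, hq2_eq, hp2_eq⟩ := hsol t hq1 hp1 hq2 hp2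
  exact ⟨hq1_eq, hp1_eq, hq2_eq, hp2_eq⟩

namespace SasanoEqsAt

variable {a0 a1 a3 l : ℂ} {q1 p1 q2 p2 : ℂ → ℂ}

lemma tendsto_q1_mul_p1 (heqs : ∀ᶠ t in 𝓝[≠] 0, SasanoEqsAt a0 a1 a3 q1 p1 q2 p2 t)
    (hq1 : ContinuousAt q1 0) (hq2 : ContinuousAt q2 0) (hp2 : ContinuousAt p2 0)
    (hp1 : meromorphicOrderAt p1 0 < 0) :
    Tendsto (fun t ↦ q1 t * p1 t) (𝓝[≠] 0)
      (𝓝 (q1 0 - (meromorphicOrderAt p1 0).untop₀ / 2 - (a0 + a1 + a3) / 2 - q2 0 * p2 0)) := by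
  have hpole := tendsto_cobounded_of_meromorphicOrderAt_neg hp1
  have hlog := tendsto_sub_mul_logDeriv
    (meromorphicAt_of_meromorphicOrderAt_ne_zero hp1.ne) hp1.ne_top
  have hcont : ContinuousAt (fun t ↦ q1 t - (a0 + a1 + a3) / 2 - q2 t * p2 t) 0 := by fun_prop
  have hlim := (hcont.continuousWithinAt.tendsto.sub (hlog.div_const 2)).add
    ((tendsto_inv₀_cobounded.comp hpole).const_mul (a0 / 2))
  rw [mul_zero, add_zero] at hlim
  convert hlim.congr' ?_ using 2
  · ring
  filter_upwards [heqs, hpole.eventually_ne_cobounded 0] with t ht hp1t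
  simp only [logDeriv_apply, Function.comp_apply, sub_zero]
  field_simp
  linear_combination -ht.p1_eq

lemma tendsto_mul_p1 (heqs : ∀ᶠ t in 𝓝[≠] 0, SasanoEqsAt a0 a1 a3 q1 p1 q2 p2 t)
    (hq2 : AnalyticAt ℂ q2 0) (hp2 : ContinuousAt p2 0)
    (hl : Tendsto (fun t ↦ q1 t * p1 t) (𝓝[≠] 0) (𝓝 l)) :
    Tendsto (fun t ↦ t * p1 t) (𝓝[≠] 0)
      (𝓝 ((q2 0 ^ 2 - 2 * q2 0 ^ 2 * p2 0 - (a0 + a1 + a3) * q2 0 - 2 * l * q2 0) / 4)) := by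
  have hcont : ContinuousAt (fun t ↦ t * deriv q2 t - 2 * q2 t ^ 2 * p2 t + q2 t ^ 2
      - (a0 + a1 + a3) * q2 t + t) 0 := by
    have := hq2.continuousAt
    have := hq2.deriv.continuousAt
    fun_prop
  have hlim := (hcont.continuousWithinAt.tendsto.sub
    ((hl.mul hq2.continuousAt.continuousWithinAt.tendsto).const_mul 2)).div_const 4
  convert hlim.congr' ?_ using 2
  · ring
  filter_upwards [heqs] with t ht
  linear_combination ht.q2_eq / 4

lemma q1_eq_zero (heqs : ∀ᶠ t in 𝓝[≠] 0, SasanoEqsAt a0 a1 a3 q1 p1 q2 p2 t)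
    (hq1 : ContinuousAt q1 0) (hq2 : ContinuousAt q2 0) (hp2 : ContinuousAt p2 0)
    (hp1 : meromorphicOrderAt p1 0 < 0) : q1 0 = 0 :=
  eq_zero_of_tendsto_mul_of_tendsto_cobounded hq1
    (tendsto_cobounded_of_meromorphicOrderAt_neg hp1) (tendsto_q1_mul_p1 heqs hq1 hq2 hp2 hp1)

lemma meromorphicOrderAt_p1_eq_neg_one
    (heqs : ∀ᶠ t in 𝓝[≠] 0, SasanoEqsAt a0 a1 a3 q1 p1 q2 p2 t)
    (hq1 : ContinuousAt q1 0) (hq2 : AnalyticAt ℂ q2 0) (hp2 : ContinuousAt p2 0)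
    (hp1 : meromorphicOrderAt p1 0 < 0) : meromorphicOrderAt p1 0 = -1 := by
  have hlim := tendsto_q1_mul_p1 heqs hq1 hq2.continuousAt hp2 hp1
  have hres := tendsto_mul_p1 heqs hq2 hp2 hlim
  exact meromorphicOrderAt_eq_neg_one_of_tendsto_sub_mul hp1 (by simpa only [sub_zero] using hres)

lemma tendsto_q1_mul_p1_of_simple_pole
    (heqs : ∀ᶠ t in 𝓝[≠] 0, SasanoEqsAt a0 a1 a3 q1 p1 q2 p2 t)
    (hq1 : ContinuousAt q1 0) (hq2 : ContinuousAt q2 0) (hp2 : ContinuousAt p2 0)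
    (hp1 : meromorphicOrderAt p1 0 = -1) :
    Tendsto (fun t ↦ q1 t * p1 t) (𝓝[≠] 0) (𝓝 ((1 - (a0 + a1 + a3)) / 2 - q2 0 * p2 0)) := by
  have hneg : meromorphicOrderAt p1 0 < 0 := by rw [hp1]; decide
  have hlim := tendsto_q1_mul_p1 heqs hq1 hq2 hp2 hneg
  have huntop : (-1 : WithTop ℤ).untop₀ = -1 := rfl
  convert hlim using 2
  rw [q1_eq_zero heqs hq1 hq2 hp2 hneg, hp1, huntop]
  push_cast
  ring

lemma p2_eq_at_zero (heqs : ∀ᶠ t in 𝓝[≠] 0, SasanoEqsAt a0 a1 a3 q1 p1 q2 p2 t)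
    (hq2 : ContinuousAt q2 0) (hp2 : AnalyticAt ℂ p2 0)
    (hl : Tendsto (fun t ↦ q1 t * p1 t) (𝓝[≠] 0) (𝓝 l)) :
    -2 * q2 0 * p2 0 ^ 2 + 2 * q2 0 * p2 0 - (a0 + a1 + a3) * p2 0 + a1 - 2 * l * p2 0 = 0 := by
  have hcont : ContinuousAt (fun t ↦ -2 * q2 t * p2 t ^ 2 + 2 * q2 t * p2 t
      - (a0 + a1 + a3) * p2 t + a1 - t * deriv p2 t) 0 := by
    have := hp2.continuousAt
    have := hp2.deriv.continuousAt
    fun_prop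
  have hlim := hcont.continuousWithinAt.tendsto.sub
    ((hl.mul hp2.continuousAt.continuousWithinAt.tendsto).const_mul 2)
  have hzero := tendsto_nhds_unique (hlim.congr' (f₂ := fun _ ↦ (0 : ℂ)) ?_) tendsto_const_nhds
  · linear_combination hzero
  filter_upwards [heqs] with t ht
  linear_combination -ht.p2_eq

lemma deriv_q1_eq_at_zero (heqs : ∀ᶠ t in 𝓝[≠] 0, SasanoEqsAt a0 a1 a3 q1 p1 q2 p2 t)
    (hq1 : AnalyticAt ℂ q1 0) (hq1₀ : q1 0 = 0) (hq2 : ContinuousAt q2 0) (hp2 : ContinuousAt p2 0)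
    (hl : Tendsto (fun t ↦ q1 t * p1 t) (𝓝[≠] 0) (𝓝 l)) :
    deriv q1 0 = (2 * l + (a0 + a1 + a3) + 2 * q2 0 * p2 0) * deriv q1 0 - 1 + 4 * p2 0 := by
  have hslope := tendsto_inv_sub_mul_of_hasDerivAt hq1.differentiableAt.hasDerivAt hq1₀
  simp only [sub_zero] at hslope
  have hcont : ContinuousAt (fun t ↦ a0 + a1 + a3 - q1 t + 2 * q2 t * p2 t) 0 := by
    have := hq1.continuousAt
    fun_prop
  have hlim := ((((hl.const_mul 2).add hcont.continuousWithinAt.tendsto).mul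
    hslope).sub_const 1).add (hp2.continuousWithinAt.tendsto.const_mul 4)
  have hderiv := tendsto_nhds_unique (hlim.congr' (f₂ := deriv q1) ?_)
    hq1.deriv.continuousAt.continuousWithinAt.tendsto
  · linear_combination -hderiv - deriv q1 0 * hq1₀
  filter_upwards [heqs, self_mem_nhdsWithin] with t ht (ht₀ : t ≠ 0)
  apply mul_left_cancel₀ ht₀
  field_simp
  linear_combination -ht.q1_eq

end SasanoEqsAt

open SasanoEqsAt in
theorem sasano_p1_pole_at_zero_general {a0 a1 a3 : ℂ} {q1 p1 q2 p2 : ℂ → ℂ}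
    (hsol : ∀ᶠ t in 𝓝[≠] 0, SasanoEqsAt a0 a1 a3 q1 p1 q2 p2 t)
    (hp1 : meromorphicOrderAt p1 0 < 0)
    (hq1 : AnalyticAt ℂ q1 0) (hq2 : AnalyticAt ℂ q2 0) (hp2 : AnalyticAt ℂ p2 0) :
    (4 * a1 - 1) * (4 * a1 + 1) ≠ 0 ∧
    Tendsto (fun t ↦ t * p1 t) (𝓝[≠] 0) (𝓝 ((4 * a1 - 1) * (4 * a1 + 1) / 16)) ∧
    q1 0 = 0 ∧
    deriv q1 0 = (-8 * a0 - 8 * a3 + 6) / ((4 * a1 - 1) * (4 * a1 + 1)) ∧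
    q2 0 = -2 * a1 + 1 / 2 ∧
    p2 0 = 1 / 4 := by
  have hq1c := hq1.continuousAt
  have hq2c := hq2.continuousAt
  have hp2c := hp2.continuousAt
  have hq1₀ : q1 0 = 0 := q1_eq_zero hsol hq1c hq2c hp2c hp1
  have hsimple := meromorphicOrderAt_p1_eq_neg_one hsol hq1c hq2 hp2c hp1
  have hprod := tendsto_q1_mul_p1_of_simple_pole hsol hq1c hq2c hp2c hsimple
  have hp2₀ : p2 0 = 1 / 4 := by
    linear_combination -deriv_q1_eq_at_zero hsol hq1 hq1₀ hq2c hp2c hprod / 4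
  rw [hp2₀] at hprod
  have hq2₀ : q2 0 = -2 * a1 + 1 / 2 := by
    have hconst := p2_eq_at_zero hsol hq2c hp2 hprod
    rw [hp2₀] at hconst
    linear_combination 2 * hconst
  have hres : Tendsto (fun t ↦ t * p1 t) (𝓝[≠] 0) (𝓝 ((4 * a1 - 1) * (4 * a1 + 1) / 16)) := by
    convert tendsto_mul_p1 hsol hq2 hp2c hprod using 2
    rw [hp2₀, hq2₀]
    ring
  have hres' : Tendsto (fun t ↦ (t - 0) * p1 t) (𝓝[≠] 0)
      (𝓝 ((4 * a1 - 1) * (4 * a1 + 1) / 16)) := by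
    simpa only [sub_zero] using hres
  have hne : (4 * a1 - 1) * (4 * a1 + 1) ≠ 0 :=
    (div_ne_zero_iff.1 (ne_zero_of_tendsto_sub_mul hsimple hres')).1
  refine ⟨hne, hres, hq1₀, ?_, hq2₀, hp2₀⟩
  have hderiv := deriv_mul_residue_eq hq1.differentiableAt.hasDerivAt hq1₀ hres' hprod
  rw [hq2₀] at hderiv
  rw [eq_div_iff hne]
  linear_combination 16 * hderiv

theorem sasano_p1_pole_at_zero (a0 a1 a2 a3 : ℂ)
    (hpar : a0 + a1 + 2 * a2 + a3 = 1 / 2)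
    (q1 p1 q2 p2 : RatFunc ℂ)
    (hsol : IsSasanoSol a0 a1 a3 q1 p1 q2 p2)
    (hp1 : ¬ NoPoleAt p1 0)
    (hq1 : NoPoleAt q1 0) (hq2 : NoPoleAt q2 0) (hp2 : NoPoleAt p2 0) :
    (4 * a1 - 1) * (4 * a1 + 1) ≠ 0 ∧
    Tendsto (fun t : ℂ => t * evR p1 t) (𝓝[≠] 0)
      (𝓝 ((4 * a1 - 1) * (4 * a1 + 1) / 16)) ∧
    evR q1 0 = 0 ∧
    deriv (evR q1) 0 = (-8 * a0 - 8 * a3 + 6) / ((4 * a1 - 1) * (4 * a1 + 1)) ∧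
    evR q2 0 = -2 * a1 + 1 / 2 ∧
    evR p2 0 = 1 / 4 :=
  sasano_p1_pole_at_zero_general (hsol.eventually_sasanoEqsAt 0)
    (meromorphicOrderAt_evR_neg hp1) hq1.analyticAt_evR hq2.analyticAt_evR hp2.analyticAt_evR
end
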